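/- For every integer n ≥ 2, the triply-refined ASM generating function satisfies: y(z2−z1)·z3·Ztri_n(x,y;z1,z2,z3)·Z_{n−1}(x,y) = (z1−1)((z2−1)(z3−1)−y·z2·z3)·Zadj_n(x,y;z1,z3)·Z_{n−1}(x,y;z2) − (z2−1)(x(z1−1)(z3−1)−y)·z1·z3·Zbaradj_n(x,y;z2,z3)·Z_{n−1}(x,y;z1) − (z1−1)(z2−1)(z3−1)·Z_{n−1}(x,y;z2)·Z_{n−1}(x,y) + (z1−1)(z2−1)(z3−1)·z1·z2^{n−1}·(x·z3)^n·Z_{n−1}(x,y;z1)·Z_{n−1}(x,y), as an identity of polynomials in ℤ[x,y,z1,z2,z3]. -/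

import Mathlib

open Finset

/-- The `n × n` integer matrix encoded by `e`, with entries in `{-1, 0, 1}`. -/
def asmMat {n : ℕ} (e : Fin n → Fin n → Fin 3) : Fin n → Fin n → ℤ :=
  fun i j => (e i j : ℤ) - 1

/-- `A` is an alternating sign matrix: all entries lie in `{-1, 0, 1}`, every
partial row sum and every partial column sum is `0` or `1` (equivalently, the
nonzero entries of each row and of each column alternate in sign), and every
complete row sum and column sum is `1`. -/
def IsASM {n : ℕ} (A : Fin n → Fin n → ℤ) : Prop :=
  (∀ i j, A i j = -1 ∨ A i j = 0 ∨ A i j = 1) ∧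
  (∀ (i j : Fin n), (∑ j' ∈ univ.filter (fun j' : Fin n => j' ≤ j), A i j') = 0 ∨
    (∑ j' ∈ univ.filter (fun j' : Fin n => j' ≤ j), A i j') = 1) ∧
  (∀ (i j : Fin n), (∑ i' ∈ univ.filter (fun i' : Fin n => i' ≤ i), A i' j) = 0 ∨
    (∑ i' ∈ univ.filter (fun i' : Fin n => i' ≤ i), A i' j) = 1) ∧
  (∀ i : Fin n, (∑ j, A i j) = 1) ∧
  (∀ j : Fin n, (∑ i, A i j) = 1)

/-- `ν(A)`, the number of generalized inversions of `A`. -/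
def nuASM {n : ℕ} (A : Fin n → Fin n → ℤ) : ℕ :=
  (∑ i : Fin n, ∑ i' : Fin n, ∑ j : Fin n, ∑ j' : Fin n,
      if i < i' ∧ j' ≤ j then A i j * A i' j' else 0).toNat

/-- `μ(A)`, the number of entries of `A` equal to `-1`. -/
def muASM {n : ℕ} (A : Fin n → Fin n → ℤ) : ℕ :=
  (univ.filter (fun p : Fin n × Fin n => A p.1 p.2 = -1)).card

/-- `ρT(A)`, the number of `0`'s to the left of the `1` in the top row of `A`. -/
def rhoT {n : ℕ} (A : Fin n → Fin n → ℤ) : ℕ :=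
  (univ.filter (fun j : Fin n =>
    A ⟨0, j.pos⟩ j = 0 ∧ ∃ j' : Fin n, j < j' ∧ A ⟨0, j.pos⟩ j' = 1)).card

/-- `ρR(A)`, the number of `0`'s below the `1` in the right-most column of `A`. -/
def rhoR {n : ℕ} (A : Fin n → Fin n → ℤ) : ℕ :=
  (univ.filter (fun i : Fin n =>
    A i ⟨n - 1, Nat.sub_lt i.pos Nat.one_pos⟩ = 0 ∧
      ∃ i' : Fin n, i' < i ∧ A i' ⟨n - 1, Nat.sub_lt i.pos Nat.one_pos⟩ = 1)).card

/-- `ρB(A)`, the number of `0`'s to the right of the `1` in the bottom row of `A`. -/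
def rhoB {n : ℕ} (A : Fin n → Fin n → ℤ) : ℕ :=
  (univ.filter (fun j : Fin n =>
    A ⟨n - 1, Nat.sub_lt j.pos Nat.one_pos⟩ j = 0 ∧
      ∃ j' : Fin n, j' < j ∧ A ⟨n - 1, Nat.sub_lt j.pos Nat.one_pos⟩ j' = 1)).card

/-- `ρL(A)`, the number of `0`'s above the `1` in the left-most column of `A`. -/
def rhoL {n : ℕ} (A : Fin n → Fin n → ℤ) : ℕ :=
  (univ.filter (fun i : Fin n =>
    A i ⟨0, i.pos⟩ = 0 ∧ ∃ i' : Fin n, i < i' ∧ A i' ⟨0, i.pos⟩ = 1)).card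

open Classical in
/-- The quadruply-refined ASM generating function
`Zqua_n(x,y;z1,z2,z3,z4) = Σ_A x^{ν(A)} y^{μ(A)} z1^{ρT(A)} z2^{ρR(A)} z3^{ρB(A)} z4^{ρL(A)}`. -/
noncomputable def Zqua (n : ℕ) {R : Type*} [CommRing R] (x y z1 z2 z3 z4 : R) : R :=
  ∑ e : Fin n → Fin n → Fin 3,
    if IsASM (asmMat e) then
      x ^ nuASM (asmMat e) * y ^ muASM (asmMat e) * z1 ^ rhoT (asmMat e) *
        z2 ^ rhoR (asmMat e) * z3 ^ rhoB (asmMat e) * z4 ^ rhoL (asmMat e)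
    else 0

/-- Adjacent-boundary doubly-refined generating function `Zadj_n(x,y;z1,z2)`. -/
noncomputable def Zadj (n : ℕ) {R : Type*} [CommRing R] (x y z1 z2 : R) : R :=
  Zqua n x y z1 1 1 z2

/-- Alternative adjacent-boundary doubly-refined generating function `Zbaradj_n(x,y;z1,z2)`. -/
noncomputable def Zbaradj (n : ℕ) {R : Type*} [CommRing R] (x y z1 z2 : R) : R :=
  Zqua n x y z1 z2 1 1

/-- Triply-refined generating function `Ztri_n(x,y;z1,z2,z3)`. -/
noncomputable def Ztri (n : ℕ) {R : Type*} [CommRing R] (x y z1 z2 z3 : R) : R :=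
  Zqua n x y z1 1 z2 z3

/-- Opposite-boundary doubly-refined generating function `Zopp_n(x,y;z1,z2)`. -/
noncomputable def Zopp (n : ℕ) {R : Type*} [CommRing R] (x y z1 z2 : R) : R :=
  Zqua n x y z1 1 z2 1

/-- Singly-refined generating function `Z_n(x,y;z)`. -/
noncomputable def Zsing (n : ℕ) {R : Type*} [CommRing R] (x y z : R) : R :=
  Zqua n x y z 1 1 1

/-- Unrefined generating function `Z_n(x,y)`.  Note `Zun 0 x y = 1`. -/
noncomputable def Zun (n : ℕ) {R : Type*} [CommRing R] (x y : R) : R :=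
  Zqua n x y 1 1 1 1

/-!
The proof uses the six-vertex model with domain wall boundary conditions. By the Yang–Baxter
equation the partition function `domainWall` is symmetric in the row parameters, and it is a
polynomial in each column parameter. If a column parameter equals a row parameter, or the other
value at which a weight of that row vanishes, then the lattice loses a row and a column. A
polynomial which vanishes at more of these nodes than its degree is zero, and this yields, by a
simultaneous induction, a Plücker relation between partition functions of the same size and the
three-term relation `threeTerm_eq_zero` between partition functions of two consecutive sizes.

In the three-term relation all parameters are now made homogeneous, except for those of the first
and of the last row and of the first column. Up to a gauge transformation, which only contributes
a factor that is the same for all alternating sign matrices, the weight of a matrix then records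
`ν`, `μ`, `ρT`, `ρB` and `ρL`, apart from extra factors `c₁` and `c₂` for zeros in the two corners
of the first column. Matrices with a `1` in such a corner reduce to matrices of the next smaller
size, which accounts for the last two terms. A half-turn exchanges `ρT` with `ρB` and `ρR` with
`ρL`.
-/

/-- The local weights of a vertex of the six-vertex model. The first digit of a name is the
incoming horizontal edge and the second one the incoming vertical edge; `one` and `neg` are the
weights of the vertices which correspond to the entries `1` and `-1` of an alternating sign
matrix, so that the incoming edges are `00` for `one` and `11` for `neg`. -/
structure Vertex (R : Type*) where
  w00 : R
  w11 : R
  w01 : R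
  w10 : R
  one : R
  neg : R

/-- The image of a vertex under a ring homomorphism. -/
def Vertex.map {R S : Type*} [CommRing R] [CommRing S] (φ : R →+* S) (W : Vertex R) : Vertex S :=
  ⟨φ W.w00, φ W.w11, φ W.w01, φ W.w10, φ W.one, φ W.neg⟩

/-- The row-to-row transfer operator on functions of the states of the vertical edges, with `h` on
the leftmost horizontal edge and `true` on the rightmost one. Lists of edges whose length is not
the number of columns give `0`. -/
def rowOp {R γ : Type*} [CommRing R] (w : γ → Vertex R) :
    List γ → Bool → (List Bool → R) → List Bool → R
  | [], true, f, [] => f []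
  | [], false, _, [] => 0
  | [], _, _, _ :: _ => 0
  | _ :: _, _, _, [] => 0
  | v :: vs, false, f, false :: s =>
      (w v).w00 * rowOp w vs false (fun t => f (false :: t)) s +
        (w v).one * rowOp w vs true (fun t => f (true :: t)) s
  | v :: vs, false, f, true :: s => (w v).w01 * rowOp w vs false (fun t => f (true :: t)) s
  | v :: vs, true, f, false :: s => (w v).w10 * rowOp w vs true (fun t => f (false :: t)) s
  | v :: vs, true, f, true :: s =>
      (w v).w11 * rowOp w vs true (fun t => f (true :: t)) s +
        (w v).neg * rowOp w vs false (fun t => f (false :: t)) s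

/-- The partition function of the six-vertex model with rows `us` and columns `vs`, where `s` is
the state of the upper vertical edges, the lower vertical edges are `true`, the left horizontal
edges are `false` and the right ones are `true`. -/
def partitionFn {R ρ γ : Type*} [CommRing R] (w : ρ → γ → Vertex R) :
    List ρ → List γ → List Bool → R
  | [], vs, s => if s = List.replicate vs.length true then 1 else 0
  | u :: us, vs, s => rowOp (w u) vs false (partitionFn w us vs) s

section TransferOperator

variable {R ρ γ : Type*} [CommRing R]

theorem rowOp_add (w : γ → Vertex R) (vs : List γ) (h : Bool) (f g : List Bool → R)
    (s : List Bool) :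
    rowOp w vs h (fun t => f t + g t) s = rowOp w vs h f s + rowOp w vs h g s := by
  induction vs generalizing h f g s with
  | nil => cases h <;> cases s <;> simp [rowOp]
  | cons v vs ih =>
    rcases s with _ | ⟨b, s⟩
    · simp [rowOp]
    · cases h <;> cases b <;> simp only [rowOp, ih] <;> ring

theorem rowOp_mul_left (w : γ → Vertex R) (vs : List γ) (h : Bool) (c : R) (f : List Bool → R)
    (s : List Bool) :
    rowOp w vs h (fun t => c * f t) s = c * rowOp w vs h f s := by
  induction vs generalizing h f s with
  | nil => cases h <;> cases s <;> simp [rowOp]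
  | cons v vs ih =>
    rcases s with _ | ⟨b, s⟩
    · simp [rowOp]
    · cases h <;> cases b <;> simp only [rowOp, ih] <;> ring

theorem rowOp_zero (w : γ → Vertex R) (vs : List γ) (h : Bool) (s : List Bool) :
    rowOp w vs h (fun _ => 0) s = 0 := by
  simpa using rowOp_mul_left w vs h 0 (fun _ => 0) s

theorem rowOp_mem {ι : Type*} (N : Submodule R (ι → R)) (w : γ → Vertex R) (vs : List γ)
    (h : Bool) (f : ι → List Bool → R) (hf : ∀ s, (fun i => f i s) ∈ N) (s : List Bool) :
    (fun i => rowOp w vs h (f i) s) ∈ N := by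
  induction vs generalizing h f s with
  | nil => cases h <;> cases s <;> simp only [rowOp] <;> first | exact hf _ | exact N.zero_mem
  | cons v vs ih =>
    have ih' := fun h b => ih h (fun i t => f i (b :: t)) fun t => hf (b :: t)
    rcases s with _ | ⟨b, s⟩
    · exact N.zero_mem
    · cases h <;> cases b <;> simp only [rowOp]
      · exact N.add_mem (N.smul_mem _ (ih' _ _ s)) (N.smul_mem _ (ih' _ _ s))
      · exact N.smul_mem _ (ih' _ _ s)
      · exact N.smul_mem _ (ih' _ _ s)
      · exact N.add_mem (N.smul_mem _ (ih' _ _ s)) (N.smul_mem _ (ih' _ _ s))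

theorem map_rowOp {S γ' : Type*} [CommRing S] (φ : R →+* S) (κ : γ → γ') (w : γ → Vertex R)
    (w' : γ' → Vertex S) (hw : ∀ v, w' (κ v) = (w v).map φ) (vs : List γ) (h : Bool)
    (f : List Bool → R) (s : List Bool) :
    φ (rowOp w vs h f s) = rowOp w' (vs.map κ) h (fun t => φ (f t)) s := by
  induction vs generalizing h f s with
  | nil => cases h <;> cases s <;> simp [rowOp]
  | cons v vs ih =>
    rcases s with _ | ⟨b, s⟩
    · simp [rowOp]
    · cases h <;> cases b <;>
        simp only [rowOp, List.map_cons, map_add, map_mul, ih, hw, Vertex.map]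

theorem map_partitionFn {S ρ' γ' : Type*} [CommRing S] (φ : R →+* S) (σ : ρ → ρ') (κ : γ → γ')
    (w : ρ → γ → Vertex R) (w' : ρ' → γ' → Vertex S) (hw : ∀ u v, w' (σ u) (κ v) = (w u v).map φ)
    (us : List ρ) (vs : List γ) (s : List Bool) :
    φ (partitionFn w us vs s) = partitionFn w' (us.map σ) (vs.map κ) s := by
  induction us generalizing s with
  | nil => simp only [partitionFn, List.map_nil, List.length_map, apply_ite φ, map_one, map_zero]
  | cons u us ih =>
    simp only [partitionFn, List.map_cons, map_rowOp φ κ (w u) (w' (σ u)) (hw u), ih]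

theorem rowOp_true_replicate_false (w : γ → Vertex R) (vs : List γ) (f : List Bool → R) :
    rowOp w vs true f (List.replicate vs.length false) =
      (vs.map fun v => (w v).w10).prod * f (List.replicate vs.length false) := by
  induction vs generalizing f with
  | nil => simp [rowOp]
  | cons v vs ih => simp [rowOp, List.replicate_succ, ih, mul_assoc]

theorem rowOp_true_indicator_replicate_true (w : γ → Vertex R) (vs : List γ) (s : List Bool) :
    rowOp w vs true (fun t => if t = List.replicate vs.length true then 1 else 0) s =
      (vs.map fun v => (w v).w11).prod *
        if s = List.replicate vs.length true then 1 else 0 := by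
  induction vs generalizing s with
  | nil => cases s <;> simp [rowOp]
  | cons v vs ih =>
    rcases s with _ | ⟨_ | _, s⟩ <;> simp [rowOp, List.replicate_succ, rowOp_zero, ih]

theorem partitionFn_true_cons (w : ρ → γ → Vertex R) (us : List ρ) (v : γ) (vs : List γ)
    (s : List Bool) :
    partitionFn w us (v :: vs) (true :: s) =
      (us.map fun u => (w u v).w01).prod * partitionFn w us vs s := by
  induction us generalizing s with
  | nil => simp [partitionFn, List.replicate_succ]
  | cons u us ih => simp only [partitionFn, rowOp, ih, rowOp_mul_left, List.map_cons,
      List.prod_cons, mul_assoc]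

theorem partitionFn_of_w00_eq_zero (w : ρ → γ → Vertex R) (u : ρ) (us : List ρ) (v : γ)
    (vs : List γ) (h : (w u v).w00 = 0) :
    partitionFn w (u :: us) (v :: vs) (List.replicate (vs.length + 1) false) =
      (w u v).one * (vs.map fun v' => (w u v').w10).prod *
        (us.map fun u' => (w u' v).w01).prod *
          partitionFn w us vs (List.replicate vs.length false) := by
  simp only [partitionFn, List.replicate_succ, rowOp, h, partitionFn_true_cons, rowOp_mul_left,
    rowOp_true_replicate_false]
  ring

theorem partitionFn_of_w01_eq_zero (w : ρ → γ → Vertex R) (u : ρ) (us : List ρ) (v : γ)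
    (vs : List γ) (s : List Bool) (h : (w u v).w01 = 0) :
    partitionFn w (us ++ [u]) (v :: vs) (false :: s) =
      (w u v).one * (vs.map fun v' => (w u v').w11).prod *
        (us.map fun u' => (w u' v).w00).prod * partitionFn w us vs s := by
  induction us generalizing s with
  | nil =>
    simp [partitionFn, rowOp, List.replicate_succ, rowOp_zero, rowOp_true_indicator_replicate_true]
  | cons u' us ih =>
    simp only [List.cons_append, partitionFn, rowOp, ih, partitionFn_true_cons, List.map_append,
      List.map_cons, List.map_nil, List.prod_append, List.prod_cons, h, rowOp_mul_left,
      List.prod_nil, mul_one, mul_zero, zero_mul, rowOp_zero, add_zero]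
    ring

end TransferOperator

/-- The weight `1 - d v + x u v` of the vertex in row `u` and column `v` at which both paths go
straight or both are absent; for `u = v` it is the weight of a turn. -/
def straightWeight {R : Type*} [CommRing R] (x d u v : R) : R :=
  1 - d * v + x * u * v

/-- The weights of the six-vertex model with row parameter `u` and column parameter `v`, for the
global parameters `x` and `d`. The usual trigonometric weights are reparametrized in such a way
that all weights are polynomials in the parameters and that for `d = 1 + x - y` the weights at
`u = 1` and `v = 0` give `x` to an inversion and `y` to a pair of a `1` and a `-1`. -/
def sixVertex {R : Type*} [CommRing R] (x d u v : R) : Vertex R where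
  w00 := x * (u - v)
  w11 := u - v
  w01 := straightWeight x d u v
  w10 := straightWeight x d u v
  one := straightWeight x d u u
  neg := straightWeight x d v v

/-- The crossing `X` intertwines the products `T` and `T'` of two rows in opposite orders, where
the arguments of `T` and `T'` are the leftmost horizontal edges of the two rows. -/
structure Intertwines {R : Type*} [CommRing R] (X : Vertex R) (T T' : Bool → Bool → R) :
    Prop where
  same : ∀ h, X.w01 * T h h = X.w01 * T' h h
  false_true : X.w01 * T false true = X.neg * T' false true + X.w11 * T' true false
  true_false : X.w01 * T true false = X.w00 * T' false true + X.one * T' true false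

/-- The product of two rows with the leftmost horizontal edges `h` and `h'`. -/
def twoRows {R γ : Type*} [CommRing R] (w w' : γ → Vertex R) (vs : List γ)
    (f : List Bool → R) (s : List Bool) (h h' : Bool) : R :=
  rowOp w vs h (rowOp w' vs h' f) s

section YangBaxter

variable {R : Type*} [CommRing R] (x d u₁ u₂ : R)

theorem map_sixVertex {S : Type*} [CommRing S] (φ : R →+* S) (u v : R) :
    sixVertex (φ x) (φ d) (φ u) (φ v) = (sixVertex x d u v).map φ := by
  simp [Vertex.map, sixVertex, straightWeight]

variable {x d u₁ u₂} {v : R} {vs : List R} {f : List Bool → R} {s : List Bool}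
    (hf : Intertwines (sixVertex x d u₁ u₂)
      (twoRows (sixVertex x d u₂) (sixVertex x d u₁) vs (fun t => f (false :: t)) s)
      (twoRows (sixVertex x d u₁) (sixVertex x d u₂) vs (fun t => f (false :: t)) s))
    (ht : Intertwines (sixVertex x d u₁ u₂)
      (twoRows (sixVertex x d u₂) (sixVertex x d u₁) vs (fun t => f (true :: t)) s)
      (twoRows (sixVertex x d u₁) (sixVertex x d u₂) vs (fun t => f (true :: t)) s))

include hf ht

theorem Intertwines.cons_false :
    Intertwines (sixVertex x d u₁ u₂)
      (twoRows (sixVertex x d u₂) (sixVertex x d u₁) (v :: vs) f (false :: s))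
      (twoRows (sixVertex x d u₁) (sixVertex x d u₂) (v :: vs) f (false :: s)) := by
  obtain ⟨E, F, G⟩ := hf
  obtain ⟨E', F', G'⟩ := ht
  simp only [twoRows, sixVertex, straightWeight] at E F G E' F' G'
  constructor
  · rintro (_ | _)
    · simp only [twoRows, rowOp, rowOp_add, rowOp_mul_left, sixVertex, straightWeight]
      linear_combination x * (u₂ - v) * x * (u₁ - v) * E false +
        x * (u₂ - v) * (1 - d * u₁ + x * u₁ * u₁) * F' +
        (1 - d * u₂ + x * u₂ * u₂) * (1 - d * v + x * u₁ * v) * G'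
    · simp only [twoRows, rowOp, rowOp_mul_left, sixVertex, straightWeight]
      linear_combination (1 - d * v + x * u₂ * v) * (1 - d * v + x * u₁ * v) * E true
  · simp only [twoRows, rowOp, rowOp_add, rowOp_mul_left, sixVertex, straightWeight]
    linear_combination x * (u₂ - v) * (1 - d * v + x * u₁ * v) * F +
      (1 - d * u₂ + x * u₂ * u₂) * (u₁ - v) * E' true +
      (1 - d * u₂ + x * u₂ * u₂) * (1 - d * v + x * v * v) * G
  · simp only [twoRows, rowOp, rowOp_add, rowOp_mul_left, sixVertex, straightWeight]
    linear_combination (1 - d * v + x * u₂ * v) * x * (u₁ - v) * G +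
      (1 - d * v + x * u₂ * v) * (1 - d * u₁ + x * u₁ * u₁) * E' true

theorem Intertwines.cons_true :
    Intertwines (sixVertex x d u₁ u₂)
      (twoRows (sixVertex x d u₂) (sixVertex x d u₁) (v :: vs) f (true :: s))
      (twoRows (sixVertex x d u₁) (sixVertex x d u₂) (v :: vs) f (true :: s)) := by
  obtain ⟨E, F, G⟩ := hf
  obtain ⟨E', F', G'⟩ := ht
  simp only [twoRows, sixVertex, straightWeight] at E F G E' F' G'
  constructor
  · rintro (_ | _)
    · simp only [twoRows, rowOp, rowOp_mul_left, sixVertex, straightWeight]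
      linear_combination (1 - d * v + x * u₂ * v) * (1 - d * v + x * u₁ * v) * E' false
    · simp only [twoRows, rowOp, rowOp_add, rowOp_mul_left, sixVertex, straightWeight]
      linear_combination (u₂ - v) * (u₁ - v) * E' true +
        (u₂ - v) * (1 - d * v + x * v * v) * G +
        (1 - d * v + x * v * v) * (1 - d * v + x * u₁ * v) * F
  · simp only [twoRows, rowOp, rowOp_add, rowOp_mul_left, sixVertex, straightWeight]
    linear_combination (1 - d * v + x * u₂ * v) * (u₁ - v) * F' +
      (1 - d * v + x * u₂ * v) * (1 - d * v + x * v * v) * E false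
  · simp only [twoRows, rowOp, rowOp_add, rowOp_mul_left, sixVertex, straightWeight]
    linear_combination (u₂ - v) * (1 - d * v + x * u₁ * v) * G' +
      (1 - d * v + x * v * v) * x * (u₁ - v) * E false +
      (1 - d * v + x * v * v) * (1 - d * u₁ + x * u₁ * u₁) * F'

omit hf ht

variable (x d u₁ u₂ vs f s)

-- The crossing is the vertex in row `u₁` and column `u₂`.
theorem yangBaxter :
    Intertwines (sixVertex x d u₁ u₂)
      (twoRows (sixVertex x d u₂) (sixVertex x d u₁) vs f s)
      (twoRows (sixVertex x d u₁) (sixVertex x d u₂) vs f s) := by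
  induction vs generalizing f s with
  | nil => cases s <;> constructor <;> simp [twoRows, rowOp]
  | cons v vs ih =>
    rcases s with _ | ⟨_ | _, s⟩
    · constructor <;> simp [twoRows, rowOp]
    · exact (ih _ s).cons_false (ih _ s)
    · exact (ih _ s).cons_true (ih _ s)

open Polynomial in
theorem rowOp_comm :
    rowOp (sixVertex x d u₂) vs false (rowOp (sixVertex x d u₁) vs false f) s =
      rowOp (sixVertex x d u₁) vs false (rowOp (sixVertex x d u₂) vs false f) s := by
  -- Scaling the row parameters by `X` turns the crossing weight into a non-zero-divisor.
  let T (u u' : R) : R[X] := twoRows (sixVertex (C x) (C d) (C u * X))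
    (sixVertex (C x) (C d) (C u' * X)) (vs.map C) (C ∘ f) s false false
  have eval_T (u u' : R) : (T u u').eval 1 =
      rowOp (sixVertex x d u) vs false (rowOp (sixVertex x d u') vs false f) s := by
    have hw (u : R) (v : R[X]) : sixVertex x d u (evalRingHom 1 v) =
        (sixVertex (C x) (C d) (C u * X) v).map (evalRingHom 1) := by
      simp [← map_sixVertex]
    change evalRingHom 1 (T u u') = _
    simp only [T, twoRows, map_rowOp _ _ _ _ (hw _), List.map_map]
    simp [Function.comp_def]
  have hT : straightWeight (C x) (C d) (C u₁ * X) (C u₂ * X) * T u₂ u₁ =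
      straightWeight (C x) (C d) (C u₁ * X) (C u₂ * X) * T u₁ u₂ :=
    (yangBaxter (C x) (C d) (C u₁ * X) (C u₂ * X) (vs.map C) (C ∘ f) s).same false
  have regular : straightWeight (C x) (C d) (C u₁ * X) (C u₂ * X) ∈ nonZeroDivisors R[X] :=
    Polynomial.mem_nonzeroDivisors_of_coeff_mem 0 (by
      simp [straightWeight, mul_assoc, coeff_zero_eq_eval_zero])
  rw [← eval_T, ← eval_T, (mul_cancel_left_mem_nonZeroDivisors regular).1 hT]

end YangBaxter

section PolynomialFunctions

variable {R : Type*} [CommRing R]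

open Polynomial

/-- The functions on `R` which are given by polynomials of degree less than `n`. -/
noncomputable def polyFunLT (R : Type*) [CommRing R] (n : ℕ) : Submodule R (R → R) :=
  (degreeLT R n).map (LinearMap.pi fun t => leval t)

theorem mem_polyFunLT {n : ℕ} {f : R → R} :
    f ∈ polyFunLT R n ↔ ∃ p : R[X], (∀ k, n ≤ k → p.coeff k = 0) ∧ ∀ t, p.eval t = f t := by
  simp [polyFunLT, mem_degreeLT, degree_lt_iff_coeff_zero, funext_iff]

theorem mul_mem_polyFunLT {m n : ℕ} {f g : R → R} (hf : f ∈ polyFunLT R (m + 1))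
    (hg : g ∈ polyFunLT R n) : f * g ∈ polyFunLT R (m + n) := by
  obtain ⟨p, hp, hpf⟩ := mem_polyFunLT.1 hf
  obtain ⟨q, hq, hqg⟩ := mem_polyFunLT.1 hg
  refine mem_polyFunLT.2 ⟨p * q, fun k hk => ?_, fun t => by simp [hpf, hqg]⟩
  rw [coeff_mul]
  refine sum_eq_zero fun ij hij => ?_
  rw [HasAntidiagonal.mem_antidiagonal] at hij
  rcases Nat.lt_or_ge m ij.1 with h | h
  · rw [hp _ h, zero_mul]
  · rw [hq _ (by omega), mul_zero]

theorem const_mem_polyFunLT (a : R) : (fun _ => a) ∈ polyFunLT R 1 :=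
  mem_polyFunLT.2 ⟨C a, fun k hk => coeff_C_of_ne_zero (by omega), fun t => eval_C⟩

theorem affine_mem_polyFunLT (a b : R) : (fun t => a + b * t) ∈ polyFunLT R 2 := by
  refine mem_polyFunLT.2 ⟨C a + C b * X, fun k hk => ?_, fun t => by simp⟩
  obtain ⟨k, rfl⟩ := Nat.exists_eq_add_of_le' hk
  simp

theorem eq_zero_of_mem_polyFunLT [IsDomain R] {n : ℕ} {f : R → R} (hf : f ∈ polyFunLT R n)
    {s : Multiset R} (hs : s.Nodup) (hn : n ≤ s.card) (h : ∀ a ∈ s, f a = 0) : f = 0 := by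
  classical
  obtain ⟨p, hp, hpf⟩ := mem_polyFunLT.1 hf
  have p_eq_zero : p = 0 := by
    refine eq_zero_of_degree_lt_of_eval_finset_eq_zero ⟨s, hs⟩
      ((degree_lt_iff_coeff_zero _ _).2 fun k hk => hp k (hn.trans hk)) fun a ha => ?_
    rw [hpf, h a ha]
  ext t
  rw [← hpf, p_eq_zero, eval_zero, Pi.zero_apply]

end PolynomialFunctions

section DomainWall

variable {R : Type*} [CommRing R] (x d : R)

theorem partitionFn_perm {us us' : List R} (p : us.Perm us') (vs : List R) :
    partitionFn (sixVertex x d) us vs = partitionFn (sixVertex x d) us' vs := by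
  induction p with
  | nil => rfl
  | cons u _ ih => ext s; simp only [partitionFn, ih]
  | swap u u' l => ext s; exact rowOp_comm x d u u' vs _ s
  | trans _ _ ih₁ ih₂ => rw [ih₁, ih₂]

/-- The partition function of the six-vertex model with domain wall boundary conditions, row
parameters `us` and column parameters `vs`. -/
def domainWall (us : Multiset R) (vs : List R) : R :=
  Quotient.liftOn us
    (fun l => partitionFn (sixVertex x d) l vs (List.replicate vs.length false))
    fun _ _ p => congrFun (partitionFn_perm x d p vs) _

theorem domainWall_coe (us vs : List R) :
    domainWall x d us vs =
      partitionFn (sixVertex x d) us vs (List.replicate vs.length false) := rfl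

theorem map_domainWall {S : Type*} [CommRing S] (φ : R →+* S) (us : Multiset R) (vs : List R) :
    φ (domainWall x d us vs) = domainWall (φ x) (φ d) (us.map φ) (vs.map φ) := by
  induction us using Quotient.inductionOn with
  | h l =>
    simp only [Multiset.quot_mk_to_coe, Multiset.map_coe, domainWall_coe, List.length_map]
    exact map_partitionFn φ φ φ _ _ (map_sixVertex x d φ) l vs _

theorem domainWall_cons_nil (u : R) (us : Multiset R) : domainWall x d (u ::ₘ us) [] = 0 := by
  induction us using Quotient.inductionOn with
  | h l => rfl

variable {x d}

-- The two cases are the column parameters at which the weights `w00` and `w01` in row `u` vanish.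
theorem exists_domainWall_cons_cons {u v : R} (hv : v = u ∨ (d - x * u) * v = 1) (vs : List R) :
    ∃ (c e : R) (g : R → R), IsUnit e ∧
      (∀ k, straightWeight x d k v * (k - v) = e * (k - u) * g k) ∧
      ∀ us, domainWall x d (u ::ₘ us) (v :: vs) = c * (us.map g).prod * domainWall x d us vs := by
  rcases hv with rfl | hv
  · refine ⟨straightWeight x d v v * (vs.map (straightWeight x d v)).prod, 1,
      fun k => straightWeight x d k v, isUnit_one, fun k => by ring, fun us => ?_⟩
    induction us using Quotient.inductionOn with
    | h l => exact partitionFn_of_w00_eq_zero (sixVertex x d) v l v vs (by simp [sixVertex])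
  · refine ⟨straightWeight x d u u * (vs.map (u - ·)).prod, v, fun k => x * (k - v),
      .of_mul_eq_one_right _ hv, fun k => ?_, fun us => ?_⟩
    · rw [straightWeight]
      linear_combination -(k - v) * hv
    induction us using Quotient.inductionOn with
    | h l =>
      have append : u ::ₘ (l : Multiset R) = ↑(l ++ [u]) :=
        Multiset.coe_eq_coe.2 (List.perm_append_singleton u l).symm
      rw [Multiset.quot_mk_to_coe, append]
      exact partitionFn_of_w01_eq_zero (sixVertex x d) u l v vs _
        (by rw [sixVertex, straightWeight]; linear_combination -hv)

variable (x d)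

theorem partitionFn_mem_polyFunLT (us vs : List R) (s : List Bool) :
    (fun t => partitionFn (sixVertex x d) us (t :: vs) (false :: s)) ∈ polyFunLT R us.length ∧
    (fun t => partitionFn (sixVertex x d) us (t :: vs) (true :: s)) ∈
      polyFunLT R (us.length + 1) := by
  induction us generalizing s with
  | nil =>
    simp only [partitionFn, List.length_cons, List.replicate_succ, List.cons.injEq,
      Bool.false_eq_true, false_and, if_false, true_and]
    exact ⟨Submodule.zero_mem _, const_mem_polyFunLT _⟩
  | cons u us ih =>
    have mem_false := rowOp_mem _ (sixVertex x d u) vs false _ (fun s => (ih s).1) s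
    have mem_true (h : Bool) := rowOp_mem _ (sixVertex x d u) vs h _ (fun s => (ih s).2) s
    have w00_mem : (fun t => (sixVertex x d u t).w00) ∈ polyFunLT R 2 := by
      convert affine_mem_polyFunLT (x * u) (-x) using 2
      simp only [sixVertex]
      ring
    have w01_mem : (fun t => (sixVertex x d u t).w01) ∈ polyFunLT R 2 := by
      convert affine_mem_polyFunLT 1 (x * u - d) using 2
      simp only [sixVertex, straightWeight]
      ring
    rw [List.length_cons, add_comm us.length]
    refine ⟨Submodule.add_mem _ (mul_mem_polyFunLT w00_mem mem_false) ?_, ?_⟩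
    · rw [add_comm]
      exact Submodule.smul_mem _ _ (mem_true true)
    · rw [add_assoc]
      exact mul_mem_polyFunLT w01_mem (mem_true false)

theorem domainWall_mem_polyFunLT (us : Multiset R) (vs : List R) :
    (fun t => domainWall x d us (t :: vs)) ∈ polyFunLT R us.card := by
  induction us using Quotient.inductionOn with
  | h l => exact (partitionFn_mem_polyFunLT x d l vs _).1

end DomainWall

section Pluecker

/-- The points at which the partition functions with a row parameter in `us` reduce to smaller
ones, as functions of one column parameter. -/
def nodes {K : Type*} [Field K] (x d : K) (us : Multiset K) : Multiset K :=
  us + us.map fun u => (d - x * u)⁻¹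

/-- The row parameters `us` are generic: their nodes are finite and pairwise distinct. -/
def Generic {K : Type*} [Field K] (x d : K) (us : Multiset K) : Prop :=
  (nodes x d us).Nodup ∧ ∀ u ∈ us, d - x * u ≠ 0

/-- The left-hand side of the three-term relation between partition functions of sizes
`us.card + 2` and `us.card + 1`. -/
def threeTerm {R : Type*} [CommRing R] (x d r s w t : R) (us : Multiset R) (vs : List R) : R :=
  (r - s) * (straightWeight x d w t * (w - t)) *
      (domainWall x d (r ::ₘ s ::ₘ us) (t :: vs) * domainWall x d (w ::ₘ us) vs) +
    (s - w) * (straightWeight x d r t * (r - t)) *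
      (domainWall x d (s ::ₘ w ::ₘ us) (t :: vs) * domainWall x d (r ::ₘ us) vs) +
    (w - r) * (straightWeight x d s t * (s - t)) *
      (domainWall x d (w ::ₘ r ::ₘ us) (t :: vs) * domainWall x d (s ::ₘ us) vs)

/-- The left-hand side of the Plücker relation between partition functions of size
`us.card + 2`. -/
def fourTerm {R : Type*} [CommRing R] (x d r s w p : R) (us : Multiset R) (vs : List R) : R :=
  (r - s) * (w - p) *
      (domainWall x d (r ::ₘ s ::ₘ us) vs * domainWall x d (w ::ₘ p ::ₘ us) vs) +
    (s - w) * (r - p) *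
      (domainWall x d (s ::ₘ w ::ₘ us) vs * domainWall x d (r ::ₘ p ::ₘ us) vs) +
    (w - r) * (s - p) *
      (domainWall x d (w ::ₘ r ::ₘ us) vs * domainWall x d (s ::ₘ p ::ₘ us) vs)

section CommRing

variable {R : Type*} [CommRing R] {x d r s w p t u v : R} {us : Multiset R} {vs : List R}

theorem map_threeTerm {S : Type*} [CommRing S] (φ : R →+* S) :
    φ (threeTerm x d r s w t us vs) =
      threeTerm (φ x) (φ d) (φ r) (φ s) (φ w) (φ t) (us.map φ) (vs.map φ) := by
  simp [threeTerm, straightWeight, map_domainWall]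

theorem threeTerm_rotate : threeTerm x d s w r t us vs = threeTerm x d r s w t us vs := by
  simp only [threeTerm]
  ring

theorem fourTerm_rotate : fourTerm x d s w r p us vs = fourTerm x d r s w p us vs := by
  simp only [fourTerm]
  ring

theorem fourTerm_swap : fourTerm x d p s w r us vs = -fourTerm x d r s w p us vs := by
  rw [fourTerm, fourTerm, Multiset.cons_swap p s, Multiset.cons_swap s r, Multiset.cons_swap p r]
  ring

theorem threeTerm_eq_zero_of_node (ht : t = r ∨ (d - x * r) * t = 1) :
    threeTerm x d r s w t us vs = 0 := by
  obtain ⟨c, e, g, -, factor, reduce⟩ := exists_domainWall_cons_cons ht vs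
  simp only [threeTerm, factor, Multiset.cons_swap w r, reduce, Multiset.map_cons,
    Multiset.prod_cons]
  ring

theorem threeTerm_cons_eq_zero_of_node (ht : t = u ∨ (d - x * u) * t = 1)
    (h : fourTerm x d r s w u us vs = 0) : threeTerm x d r s w t (u ::ₘ us) vs = 0 := by
  obtain ⟨c, e, g, -, factor, reduce⟩ := exists_domainWall_cons_cons ht vs
  have reduce' (a b : R) : domainWall x d (a ::ₘ b ::ₘ u ::ₘ us) (t :: vs) =
      c * (g a * (g b * (us.map g).prod)) * domainWall x d (a ::ₘ b ::ₘ us) vs := by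
    rw [Multiset.cons_swap b, Multiset.cons_swap a, reduce]
    simp
  simp only [threeTerm, factor, reduce']
  rw [fourTerm] at h
  linear_combination c * e * g r * g s * g w * (us.map g).prod * h

theorem fourTerm_eq_zero_of_node (ht : t = r ∨ (d - x * r) * t = 1)
    (h : threeTerm x d s w p t us vs = 0) : fourTerm x d r s w p us (t :: vs) = 0 := by
  obtain ⟨c, e, g, he, factor, reduce⟩ := exists_domainWall_cons_cons ht vs
  rw [← he.mul_right_eq_zero]
  simp only [threeTerm, factor] at h
  simp only [fourTerm, Multiset.cons_swap w r, reduce, Multiset.map_cons, Multiset.prod_cons,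
    Multiset.cons_swap s p] at h ⊢
  linear_combination -(c * (us.map g).prod) * h

theorem fourTerm_cons_eq_zero_of_node (ht : t = u ∨ (d - x * u) * t = 1)
    (h : fourTerm x d r s w p us vs = 0) : fourTerm x d r s w p (u ::ₘ us) (t :: vs) = 0 := by
  obtain ⟨c, e, g, -, -, reduce⟩ := exists_domainWall_cons_cons ht vs
  have reduce' (a b : R) : domainWall x d (a ::ₘ b ::ₘ u ::ₘ us) (t :: vs) =
      c * (g a * (g b * (us.map g).prod)) * domainWall x d (a ::ₘ b ::ₘ us) vs := by
    rw [Multiset.cons_swap b, Multiset.cons_swap a, reduce]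
    simp
  simp only [fourTerm, reduce']
  rw [fourTerm] at h
  linear_combination c ^ 2 * g r * g s * g w * g p * (us.map g).prod ^ 2 * h

variable (x d r s w p us vs)

theorem threeTerm_mem_polyFunLT :
    (fun t => threeTerm x d r s w t us vs) ∈ polyFunLT R (us.card + 4) := by
  have term_mem (a b c : R) : (fun t => (a - b) * (straightWeight x d c t * (c - t)) *
      (domainWall x d (a ::ₘ b ::ₘ us) (t :: vs) * domainWall x d (c ::ₘ us) vs)) ∈
        polyFunLT R (us.card + 4) := by
    have straight_mem : straightWeight x d c ∈ polyFunLT R 2 := by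
      convert affine_mem_polyFunLT 1 (x * c - d) using 2
      rw [straightWeight]
      ring
    have sub_mem : (fun t => c - t) ∈ polyFunLT R 2 := by
      convert affine_mem_polyFunLT c (-1) using 2
      ring
    have card_eq : 1 + (1 + (a ::ₘ b ::ₘ us).card) = us.card + 4 := by
      simp only [Multiset.card_cons]
      ring
    rw [← card_eq]
    convert Submodule.smul_mem _ ((a - b) * domainWall x d (c ::ₘ us) vs)
      (mul_mem_polyFunLT straight_mem (mul_mem_polyFunLT sub_mem
        (domainWall_mem_polyFunLT x d (a ::ₘ b ::ₘ us) vs))) using 1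
    ext t
    simp only [Pi.smul_apply, Pi.mul_apply, smul_eq_mul]
    ring
  exact Submodule.add_mem _ (Submodule.add_mem _ (term_mem r s w) (term_mem s w r)) (term_mem w r s)

theorem fourTerm_mem_polyFunLT :
    (fun t => fourTerm x d r s w p us (t :: vs)) ∈ polyFunLT R (2 * us.card + 3) := by
  have term_mem (k a b a' b' : R) : (fun t => k * (domainWall x d (a ::ₘ b ::ₘ us) (t :: vs) *
      domainWall x d (a' ::ₘ b' ::ₘ us) (t :: vs))) ∈ polyFunLT R (2 * us.card + 3) := by
    have mem := domainWall_mem_polyFunLT x d (a ::ₘ b ::ₘ us) vs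
    have mem' := domainWall_mem_polyFunLT x d (a' ::ₘ b' ::ₘ us) vs
    rw [Multiset.card_cons, Multiset.card_cons] at mem mem'
    have card_eq : us.card + 1 + (us.card + 1 + 1) = 2 * us.card + 3 := by ring
    rw [← card_eq]
    exact Submodule.smul_mem _ k (mul_mem_polyFunLT mem mem')
  exact Submodule.add_mem _
    (Submodule.add_mem _ (term_mem _ r s w p) (term_mem _ s w r p)) (term_mem _ w r s p)

end CommRing

section Field

variable {K : Type*} [Field K] {x d : K} {us : Multiset K}

theorem Generic.mono {us' : Multiset K} (h : Generic x d us) (le : us' ≤ us) :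
    Generic x d us' :=
  ⟨Multiset.nodup_of_le (add_le_add le (Multiset.map_le_map le)) h.1, fun u hu =>
    h.2 u (Multiset.mem_of_le le hu)⟩

theorem Generic.eq_zero {n : ℕ} {f : K → K} (h : Generic x d us) (hf : f ∈ polyFunLT K n)
    (hn : n ≤ 2 * us.card)
    (zero : ∀ u ∈ us, ∀ v, v = u ∨ (d - x * u) * v = 1 → f v = 0) : f = 0 := by
  refine eq_zero_of_mem_polyFunLT hf h.1 (by simpa [nodes, two_mul] using hn) fun v hv => ?_
  rw [nodes, Multiset.mem_add, Multiset.mem_map] at hv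
  rcases hv with hv | ⟨u, hu, rfl⟩
  · exact zero v hv v (.inl rfl)
  · exact zero u hu _ (.inr (mul_inv_cancel₀ (h.2 u hu)))

theorem threeTerm_eq_zero_of_fourTerm {r s w : K} {vs : List K}
    (h : Generic x d (r ::ₘ s ::ₘ w ::ₘ us))
    (H : ∀ u us', us = u ::ₘ us' → fourTerm x d r s w u us' vs = 0) (t : K) :
    threeTerm x d r s w t us vs = 0 := by
  refine congrFun (h.eq_zero (threeTerm_mem_polyFunLT x d r s w us vs) (by simp; omega) ?_) t
  simp only [Multiset.mem_cons]
  rintro u (rfl | rfl | rfl | hu) v hv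
  · exact threeTerm_eq_zero_of_node hv
  · rw [← threeTerm_rotate]
    exact threeTerm_eq_zero_of_node hv
  · rw [← threeTerm_rotate, ← threeTerm_rotate]
    exact threeTerm_eq_zero_of_node hv
  · obtain ⟨us', rfl⟩ := Multiset.exists_cons_of_mem hu
    exact threeTerm_cons_eq_zero_of_node hv (H u us' rfl)

theorem fourTerm_eq_zero {r s w p : K} (vs : List K)
    (h : Generic x d (r ::ₘ s ::ₘ w ::ₘ p ::ₘ us)) : fourTerm x d r s w p us vs = 0 := by
  induction vs generalizing us r s w p with
  | nil => simp [fourTerm, domainWall_cons_nil]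
  | cons t vs ih =>
    have threeTerm_zero {a b c : K} (habc : Generic x d (a ::ₘ b ::ₘ c ::ₘ us)) (t : K) :
        threeTerm x d a b c t us vs = 0 := by
      exact threeTerm_eq_zero_of_fourTerm habc (fun u us' hus => ih (hus ▸ habc)) t
    refine congrFun (h.eq_zero (fourTerm_mem_polyFunLT x d r s w p us vs) (by simp; omega) ?_) t
    simp only [Multiset.mem_cons]
    rintro u (rfl | rfl | rfl | rfl | hu) v hv
    · exact fourTerm_eq_zero_of_node hv
        (threeTerm_zero (h.mono (Multiset.le_cons_self _ _)) v)
    · rw [← fourTerm_rotate]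
      refine fourTerm_eq_zero_of_node hv (threeTerm_zero (h.mono ?_) v)
      rw [Multiset.cons_swap w]
      exact Multiset.cons_le_cons _ (Multiset.le_cons_self _ _)
    · rw [← fourTerm_rotate, ← fourTerm_rotate]
      refine fourTerm_eq_zero_of_node hv (threeTerm_zero (h.mono ?_) v)
      exact Multiset.cons_le_cons _ (Multiset.cons_le_cons _ (Multiset.le_cons_self _ _))
    · rw [← neg_eq_zero, ← fourTerm_swap]
      refine fourTerm_eq_zero_of_node hv (threeTerm_zero (h.mono ?_) v)
      rw [Multiset.cons_swap w r, Multiset.cons_swap s r]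
      exact Multiset.cons_le_cons _ (Multiset.cons_le_cons _
        (Multiset.cons_le_cons _ (Multiset.le_cons_self _ _)))
    · obtain ⟨us', rfl⟩ := Multiset.exists_cons_of_mem hu
      refine fourTerm_cons_eq_zero_of_node hv (ih (h.mono ?_))
      exact Multiset.cons_le_cons _ (Multiset.cons_le_cons _ (Multiset.cons_le_cons _
        (Multiset.cons_le_cons _ (Multiset.le_cons_self _ _))))

end Field

end Pluecker

section Specialization

open MvPolynomial

theorem Generic.threeTerm_eq_zero {K : Type*} [Field K] {x d r s w : K} {us : Multiset K}
    (h : Generic x d (r ::ₘ s ::ₘ w ::ₘ us)) (t : K) (vs : List K) :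
    threeTerm x d r s w t us vs = 0 :=
  threeTerm_eq_zero_of_fourTerm h (fun _ _ hus => fourTerm_eq_zero vs (hus ▸ h)) t

theorem generic_map_X {K : Type*} [Field K] {σ τ : Type*} {φ : MvPolynomial (σ ⊕ τ) ℤ →+* K}
    (hφ : Function.Injective φ) (x d : τ) {us : Multiset σ} (hus : us.Nodup) :
    Generic (φ (X (.inr x))) (φ (X (.inr d))) (us.map fun i => φ (X (.inl i))) := by
  have X_injective : Function.Injective fun i : σ => φ (X (.inl i)) :=
    hφ.comp ((X_injective (R := ℤ)).comp Sum.inl_injective)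
  have x_ne_zero : φ (X (.inr x)) ≠ 0 := (map_ne_zero_iff φ hφ).2 (X_ne_zero _)
  have ne_zero (i : σ) : φ (X (.inr d)) - φ (X (.inr x)) * φ (X (.inl i)) ≠ 0 := fun h => by
    rw [← map_mul, ← map_sub, map_eq_zero_iff φ hφ] at h
    simpa using congrArg (eval (Sum.elim 0 1 : σ ⊕ τ → ℤ)) h
  refine ⟨?_, by simpa only [Multiset.mem_map, forall_exists_index, and_imp,
    forall_apply_eq_imp_iff₂] using fun i _ => ne_zero i⟩
  rw [nodes, Multiset.map_map, Multiset.nodup_add, Multiset.disjoint_map_map]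
  refine ⟨hus.map X_injective, hus.map fun i j hij => X_injective ?_, fun i _ j _ hij => ?_⟩
  · exact mul_left_cancel₀ x_ne_zero (sub_right_injective (inv_injective hij))
  · have mul_eq_one : φ (X (.inl i) * (X (.inr d) - X (.inr x) * X (.inl j))) = φ 1 := by
      simp only [map_mul, map_sub, map_one]
      exact hij ▸ inv_mul_cancel₀ (ne_zero j)
    simpa using congrArg (eval (0 : σ ⊕ τ → ℤ)) (hφ mul_eq_one)

-- The relation specializes from the universal ring, where the row parameters are distinct
-- indeterminates.
theorem threeTerm_eq_zero {S : Type*} [CommRing S] (x d r s w t : S) (us : Multiset S)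
    (vs : List S) : threeTerm x d r s w t us vs = 0 := by
  classical
  let P := MvPolynomial ((Fin 3 ⊕ S × ℕ) ⊕ S) ℤ
  let row (i : Fin 3 ⊕ S × ℕ) : P := X (.inl i)
  let param (a : S) : P := X (.inr a)
  let rows : Multiset (S × ℕ) := us.toEnumFinset.val
  have universal : threeTerm (param x) (param d) (row (.inl 0)) (row (.inl 1)) (row (.inl 2))
      (param t) (rows.map fun i => row (.inr i)) (vs.map param) = 0 := by
    have inj := IsFractionRing.injective P (FractionRing P)
    have rows_nodup : (.inl 0 ::ₘ .inl 1 ::ₘ .inl 2 ::ₘ rows.map Sum.inr :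
        Multiset (Fin 3 ⊕ S × ℕ)).Nodup := by
      simp [Multiset.nodup_map_iff_of_injective Sum.inr_injective, rows, Finset.nodup]
    refine inj ?_
    rw [map_threeTerm, map_zero, Multiset.map_map]
    refine Generic.threeTerm_eq_zero ?_ _ _
    simpa [row, Function.comp_def] using generic_map_X inj x d rows_nodup
  let φ : P →+* S := eval₂Hom (Int.castRingHom S) (Sum.elim (Sum.elim ![r, s, w] Prod.fst) id)
  have φ_row (i : Fin 3 ⊕ S × ℕ) : φ (row i) = Sum.elim ![r, s, w] Prod.fst i :=
    eval₂Hom_X' _ _ _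
  have φ_param (a : S) : φ (param a) = a := eval₂Hom_X' _ _ _
  have φ_universal := congrArg φ universal
  simpa [map_threeTerm, Function.comp_def, φ_row, φ_param, rows] using φ_universal

end Specialization

section PrefixSum

/-- The sum of the entries which strictly precede the position `j`. -/
def prefixSum {n : ℕ} (a : Fin n → ℤ) (j : Fin n) : ℤ :=
  ∑ j', if j' < j then a j' else 0

theorem prefixSum_zero {n : ℕ} (a : Fin (n + 1) → ℤ) : prefixSum a 0 = 0 :=
  sum_eq_zero fun i _ => if_neg (by simp)

theorem prefixSum_succ {n : ℕ} (a : Fin (n + 1) → ℤ) (j : Fin n) :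
    prefixSum a j.succ = a 0 + prefixSum (fun j => a j.succ) j := by
  simp [prefixSum, Fin.sum_univ_succ]

variable {n : ℕ} (a : Fin n → ℤ) (j : Fin n)

theorem sum_filter_le_eq_prefixSum_add :
    ∑ j' ∈ univ.filter (fun j' => j' ≤ j), a j' = prefixSum a j + a j := by
  rw [filter_ge_eq_Iic, ← Iio_insert, sum_insert (by simp), add_comm, prefixSum, ← sum_filter,
    filter_gt_eq_Iio]

theorem prefixSum_eq_zero_or_exists :
    prefixSum a j = 0 ∨ ∃ i, prefixSum a j = prefixSum a i + a i := by
  rcases j with ⟨_ | j, hj⟩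
  · exact .inl (sum_eq_zero fun i _ => if_neg (by simp [Fin.lt_def]))
  · refine .inr ⟨⟨j, by omega⟩, ?_⟩
    rw [← sum_filter_le_eq_prefixSum_add, prefixSum, sum_filter]
    simp only [Fin.lt_def, Fin.le_def, Nat.lt_succ_iff]

variable {a}

theorem sum_ite_le_eq (ha : ∑ j, a j = 1) :
    (∑ j', if j ≤ j' then a j' else 0) = 1 - prefixSum a j := by
  rw [← ha, prefixSum, eq_sub_iff_add_eq, ← sum_add_distrib]
  refine sum_congr rfl fun i _ => ?_
  simp only [← not_lt, ite_not]
  split_ifs <;> simp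

theorem sum_ite_lt_eq (ha : ∑ j, a j = 1) :
    (∑ j', if j < j' then a j' else 0) = 1 - (prefixSum a j + a j) := by
  rw [← ha, ← sum_filter_le_eq_prefixSum_add, sum_filter, eq_sub_iff_add_eq, ← sum_add_distrib]
  refine sum_congr rfl fun i _ => ?_
  simp only [← not_lt, ite_not]
  split_ifs <;> simp

end PrefixSum

section StateSum

/-- The matrix entry encoded by an element of `Fin 3`, as in `asmMat`. -/
def asmEntry (a : Fin 3) : ℤ :=
  (a : ℤ) - 1

variable {R ρ γ : Type*} [CommRing R]

/-- The weight of the vertex with horizontal incoming edge `h`, vertical incoming edge `s` and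
entry `asmEntry e`; it vanishes if these data are inconsistent. -/
def Vertex.weight (W : Vertex R) (h s : ℤ) (e : Fin 3) : R :=
  if e = 1 then
    if h = 0 ∧ s = 0 then W.w00 else if h = 1 ∧ s = 1 then W.w11
    else if h = 0 ∧ s = 1 then W.w01 else if h = 1 ∧ s = 0 then W.w10 else 0
  else if e = 2 then if h = 0 ∧ s = 0 then W.one else 0
  else if h = 1 ∧ s = 1 then W.neg else 0

/-- The transfer operator of a row as a sum over all rows of entries, for functions of integral
states. -/
def rowSum {n : ℕ} (w : γ → Vertex R) (k : Fin n → γ) (h : ℤ) (s : Fin n → ℤ)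
    (F : (Fin n → ℤ) → R) : R :=
  ∑ e : Fin n → Fin 3,
    (∏ j, (w (k j)).weight (h + prefixSum (fun j' => asmEntry (e j')) j) (s j) (e j)) *
      if h + ∑ j, asmEntry (e j) = 1 then F fun j => s j + asmEntry (e j) else 0

theorem rowSum_succ {n : ℕ} (w : γ → Vertex R) (k : Fin (n + 1) → γ) (h : ℤ)
    (s : Fin (n + 1) → ℤ) (F : (Fin (n + 1) → ℤ) → R) :
    rowSum w k h s F = ∑ a : Fin 3, (w (k 0)).weight h (s 0) a *
      rowSum w (fun j => k j.succ) (h + asmEntry a) (fun j => s j.succ)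
        fun σ => F (Fin.cons (s 0 + asmEntry a) σ) := by
  rw [rowSum, ← (Fin.consEquiv fun _ => Fin 3).sum_comp, Fintype.sum_prod_type]
  refine sum_congr rfl fun a _ => ?_
  rw [rowSum, mul_sum]
  refine sum_congr rfl fun e _ => ?_
  have cons_state : (fun j => s j + asmEntry ((Fin.cons a e : Fin (n + 1) → Fin 3) j)) =
      Fin.cons (s 0 + asmEntry a) fun j => s j.succ + asmEntry (e j) := by
    funext j
    cases j using Fin.cases <;> simp
  simp [Fin.consEquiv, Fin.prod_univ_succ, Fin.sum_univ_succ, add_assoc, mul_assoc, cons_state,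
    prefixSum_zero, prefixSum_succ]

theorem rowOp_eq_rowSum {n : ℕ} (w : γ → Vertex R) (k : Fin n → γ) (h : Bool) (s : Fin n → Bool)
    (f : List Bool → R) (F : (Fin n → ℤ) → R)
    (hF : ∀ σ : Fin n → Bool, F (fun j => (σ j).toInt) = f (List.ofFn σ)) :
    rowOp w (List.ofFn k) h f (List.ofFn s) = rowSum w k h.toInt (fun j => (s j).toInt) F := by
  induction n generalizing h f with
  | zero =>
    have f_nil (σ : Fin 0 → ℤ) : F σ = f [] := by
      rw [Subsingleton.elim σ fun j => (s j).toInt, hF, List.ofFn_zero]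
    cases h <;> simp [rowOp, rowSum, f_nil]
  | succ n ih =>
    have ih' (h b : Bool) : rowOp w (List.ofFn fun j => k j.succ) h (fun t => f (b :: t))
        (List.ofFn fun j => s j.succ) = rowSum w (fun j => k j.succ) h.toInt
          (fun j => (s j.succ).toInt) fun σ => F (Fin.cons b.toInt σ) := by
      refine ih _ _ _ _ _ fun σ => ?_
      rw [← List.ofFn_cons, ← hF]
      congr 1
      funext j
      cases j using Fin.cases <;> simp
    rw [rowSum_succ, List.ofFn_succ, List.ofFn_succ (f := s)]
    cases h <;> cases s 0 <;>
      simp [rowOp, Fin.sum_univ_three, Vertex.weight, asmEntry, ih', add_comm]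

/-- The partition function as a sum over all matrices of entries, for integral states of the upper
vertical edges. -/
def latticeSum {m n : ℕ} (w : ρ → γ → Vertex R) (g : Fin m → ρ) (k : Fin n → γ)
    (s : Fin n → ℤ) : R :=
  ∑ e : Fin m → Fin n → Fin 3,
    (∏ i, ∏ j, (w (g i) (k j)).weight (prefixSum (fun j' => asmEntry (e i j')) j)
      (s j + prefixSum (fun i' => asmEntry (e i' j)) i) (e i j)) *
    if (∀ i, ∑ j, asmEntry (e i j) = 1) ∧ ∀ j, s j + ∑ i, asmEntry (e i j) = 1 then 1 else 0

theorem latticeSum_succ {m n : ℕ} (w : ρ → γ → Vertex R) (g : Fin (m + 1) → ρ) (k : Fin n → γ)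
    (s : Fin n → ℤ) :
    latticeSum w g k s = rowSum (w (g 0)) k 0 s (latticeSum w (fun i => g i.succ) k) := by
  rw [latticeSum, ← (Fin.consEquiv fun _ => Fin n → Fin 3).sum_comp, Fintype.sum_prod_type,
    rowSum]
  refine sum_congr rfl fun a _ => ?_
  rw [latticeSum, zero_add]
  split_ifs with ha
  · rw [mul_sum]
    refine sum_congr rfl fun e _ => ?_
    simp [Fin.consEquiv, Fin.prod_univ_succ, Fin.sum_univ_succ, Fin.forall_fin_succ, add_assoc,
      prefixSum_zero, prefixSum_succ, ha]
  · rw [mul_zero]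
    refine sum_eq_zero fun e _ => ?_
    rw [if_neg, mul_zero]
    exact fun h => ha (by simpa [Fin.consEquiv] using h.1 0)

theorem partitionFn_eq_latticeSum {m n : ℕ} (w : ρ → γ → Vertex R) (g : Fin m → ρ) (k : Fin n → γ)
    (s : Fin n → Bool) :
    partitionFn w (List.ofFn g) (List.ofFn k) (List.ofFn s) =
      latticeSum w g k fun j => (s j).toInt := by
  induction m generalizing s with
  | zero =>
    have ofFn_eq_iff : List.ofFn s = List.replicate n true ↔ ∀ j, (s j).toInt = 1 := by
      rw [← List.ofFn_const, List.ofFn_inj, funext_iff]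
      refine forall_congr' fun j => ?_
      cases s j <;> simp
    simp [partitionFn, latticeSum, ofFn_eq_iff]
  | succ m ih =>
    rw [latticeSum_succ, List.ofFn_succ, partitionFn]
    exact rowOp_eq_rowSum _ _ false _ _ _ fun σ => (ih _ σ).symm

end StateSum

section AlternatingSign

variable {n : ℕ} {A : Fin n → Fin n → ℤ}

theorem IsASM.prefixSum_row (h : IsASM A) (i j : Fin n) :
    prefixSum (A i) j = 0 ∨ prefixSum (A i) j = 1 := by
  rcases prefixSum_eq_zero_or_exists (A i) j with h0 | ⟨k, hk⟩
  · exact .inl h0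
  · rw [hk, ← sum_filter_le_eq_prefixSum_add]
    exact h.2.1 i k

theorem IsASM.prefixSum_col (h : IsASM A) (i j : Fin n) :
    prefixSum (fun i' => A i' j) i = 0 ∨ prefixSum (fun i' => A i' j) i = 1 := by
  rcases prefixSum_eq_zero_or_exists (fun i' => A i' j) i with h0 | ⟨k, hk⟩
  · exact .inl h0
  · rw [hk, ← sum_filter_le_eq_prefixSum_add]
    exact h.2.2.1 k j

theorem IsASM.local_cases (h : IsASM A) (i j : Fin n) :
    (A i j = 0 ∧ (prefixSum (A i) j = 0 ∨ prefixSum (A i) j = 1) ∧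
      (prefixSum (fun i' => A i' j) i = 0 ∨ prefixSum (fun i' => A i' j) i = 1)) ∨
    (A i j = 1 ∧ prefixSum (A i) j = 0 ∧ prefixSum (fun i' => A i' j) i = 0) ∨
    (A i j = -1 ∧ prefixSum (A i) j = 1 ∧ prefixSum (fun i' => A i' j) i = 1) := by
  have row_mem := h.prefixSum_row i j
  have col_mem := h.prefixSum_col i j
  have row_mem_succ := h.2.1 i j
  have col_mem_succ := h.2.2.1 i j
  rw [sum_filter_le_eq_prefixSum_add] at row_mem_succ col_mem_succ
  have entry_mem := h.1 i j
  omega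

variable {e : Fin n → Fin n → Fin 3} {i j : Fin n}

theorem asmMat_eq_zero : asmMat e i j = 0 ↔ e i j = 1 := by
  rw [asmMat]
  omega

theorem asmMat_eq_one : asmMat e i j = 1 ↔ e i j = 2 := by
  rw [asmMat]
  omega

theorem asmMat_eq_neg_one : asmMat e i j = -1 ↔ e i j = 0 := by
  rw [asmMat]
  omega

theorem asmMat_cases (e : Fin n → Fin n → Fin 3) (i j : Fin n) :
    asmMat e i j = -1 ∨ asmMat e i j = 0 ∨ asmMat e i j = 1 := by
  rw [asmMat]
  omega

variable {R : Type*} [CommRing R]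

/-- The product of the vertex weights of a matrix. -/
def asmWeight (w : Fin n → Fin n → Vertex R) (e : Fin n → Fin n → Fin 3) : R :=
  ∏ i, ∏ j, (w i j).weight (prefixSum (asmMat e i) j)
    (prefixSum (fun i' => asmMat e i' j) i) (e i j)

theorem isASM_of_asmWeight_ne_zero {w : Fin n → Fin n → Vertex R} (h : asmWeight w e ≠ 0)
    (row_sum : ∀ i, ∑ j, asmMat e i j = 1) (col_sum : ∀ j, ∑ i, asmMat e i j = 1) :
    IsASM (asmMat e) := by
  have outgoing (i j : Fin n) : (prefixSum (asmMat e i) j + asmMat e i j = 0 ∨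
      prefixSum (asmMat e i) j + asmMat e i j = 1) ∧
      (prefixSum (fun i' => asmMat e i' j) i + asmMat e i j = 0 ∨
      prefixSum (fun i' => asmMat e i' j) i + asmMat e i j = 1) := by
    by_contra inconsistent
    refine h (prod_eq_zero (mem_univ i) (prod_eq_zero (mem_univ j) ?_))
    have entry_mem := asmMat_cases e i j
    simp only [Vertex.weight, ← asmMat_eq_zero, ← asmMat_eq_one]
    split_ifs <;> first | rfl | omega
  refine ⟨asmMat_cases e, fun i j => ?_, fun i j => ?_, row_sum, col_sum⟩
  · rw [sum_filter_le_eq_prefixSum_add]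
    exact (outgoing i j).1
  · rw [sum_filter_le_eq_prefixSum_add]
    exact (outgoing i j).2

open Classical in
theorem partitionFn_eq_sum_asmWeight {ρ γ : Type*} (w : ρ → γ → Vertex R) (g : Fin n → ρ)
    (k : Fin n → γ) :
    partitionFn w (List.ofFn g) (List.ofFn k) (List.replicate n false) =
      ∑ e, if IsASM (asmMat e) then asmWeight (fun i j => w (g i) (k j)) e else 0 := by
  rw [← List.ofFn_const, partitionFn_eq_latticeSum, latticeSum]
  refine sum_congr rfl fun e _ => ?_
  simp only [Bool.toInt_false, zero_add]
  by_cases h : asmWeight (fun i j => w (g i) (k j)) e = 0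
  · rw [h, ite_self]
    exact mul_eq_zero_of_left h _
  · have isASM_iff : IsASM (asmMat e) ↔ (∀ i, ∑ j, asmEntry (e i j) = 1) ∧
        ∀ j, ∑ i, asmEntry (e i j) = 1 :=
      ⟨fun H => H.2.2.2, fun H => isASM_of_asmWeight_ne_zero h H.1 H.2⟩
    rw [if_congr isASM_iff rfl rfl, mul_ite, mul_one, mul_zero]
    rfl

end AlternatingSign

section Statistics

/-- The vertex at position `(i, j)` has a vanishing entry and both incoming edges are `0`. For an
alternating sign matrix these positions are counted by `nuASM`. -/
def IsInversion {n : ℕ} (A : Fin n → Fin n → ℤ) (i j : Fin n) : Prop :=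
  A i j = 0 ∧ prefixSum (A i) j = 0 ∧ prefixSum (fun i' => A i' j) i = 0

open Classical in
theorem IsASM.nuASM_eq_sum {n : ℕ} {A : Fin n → Fin n → ℤ} (h : IsASM A) :
    nuASM A = ∑ i, ∑ j, if IsInversion A i j then 1 else 0 := by
  have pair_sum (i j' : Fin n) : ∑ i', ∑ j, (if i < i' ∧ j' ≤ j then A i j * A i' j' else 0) =
      if IsInversion A i j' then 1 else 0 := by
    have factor (i' j : Fin n) : (if i < i' ∧ j' ≤ j then A i j * A i' j' else 0) =
        (if i < i' then A i' j' else 0) * if j' ≤ j then A i j else 0 := by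
      rw [ite_zero_mul_ite_zero, mul_comm]
    simp only [factor, ← mul_sum, ← sum_mul]
    rw [sum_ite_le_eq _ (h.2.2.2.1 i), sum_ite_lt_eq (a := fun i' => A i' j') _ (h.2.2.2.2 j'),
      IsInversion]
    rcases h.local_cases i j' with ⟨hA, hr | hr, hc | hc⟩ | ⟨hA, hr, hc⟩ | ⟨hA, hr, hc⟩ <;>
      simp [hA, hr, hc]
  have quadruple_sum : (∑ i : Fin n, ∑ i' : Fin n, ∑ j : Fin n, ∑ j' : Fin n,
      if i < i' ∧ j' ≤ j then A i j * A i' j' else 0) =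
      ((∑ i, ∑ j, if IsInversion A i j then 1 else 0 : ℕ) : ℤ) := by
    push_cast
    simp only [← pair_sum]
    refine sum_congr rfl fun i _ => ?_
    conv_rhs => rw [sum_comm]
    exact sum_congr rfl fun i' _ => sum_comm
  rw [nuASM, quadruple_sum, Int.toNat_natCast]

section ZeroOne

variable {n : ℕ} {a : Fin n → ℤ} (h01 : ∀ j, a j = 0 ∨ a j = 1)

include h01

theorem sum_ite_nonneg (P : Fin n → Prop) [DecidablePred P] :
    0 ≤ ∑ j, if P j then a j else 0 :=
  sum_nonneg fun j _ => by split_ifs <;> grind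

theorem exists_eq_one_iff_sum_ite_ne_zero (P : Fin n → Prop) [DecidablePred P] :
    (∃ j, P j ∧ a j = 1) ↔ (∑ j, if P j then a j else 0) ≠ 0 := by
  rw [Ne, sum_eq_zero_iff_of_nonneg fun j _ => by split_ifs <;> grind]
  grind

variable {j : Fin n} (ha : ∑ j, a j = 1) (hj : a j = 0)

include ha hj

theorem exists_gt_eq_one_iff : (∃ j', j < j' ∧ a j' = 1) ↔ prefixSum a j = 0 := by
  have nonneg : 0 ≤ prefixSum a j := sum_ite_nonneg h01 (· < j)
  have nonneg' := sum_ite_nonneg h01 (j < ·)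
  rw [exists_eq_one_iff_sum_ite_ne_zero h01]
  rw [sum_ite_lt_eq j ha] at nonneg' ⊢
  omega

theorem exists_lt_eq_one_iff : (∃ j', j' < j ∧ a j' = 1) ↔ prefixSum a j = 1 := by
  have nonneg : 0 ≤ prefixSum a j := sum_ite_nonneg h01 (· < j)
  have nonneg' := sum_ite_nonneg h01 (j < ·)
  rw [exists_eq_one_iff_sum_ite_ne_zero h01 (· < j), ← prefixSum]
  rw [sum_ite_lt_eq j ha] at nonneg'
  omega

end ZeroOne

variable {N : ℕ} {A : Fin (N + 1) → Fin (N + 1) → ℤ}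

theorem prefixSum_last_add (a : Fin (N + 1) → ℤ) :
    prefixSum a (Fin.last N) + a (Fin.last N) = ∑ j, a j := by
  rw [← sum_filter_le_eq_prefixSum_add, filter_true_of_mem fun i _ => Fin.le_last i]

theorem IsASM.top_row (h : IsASM A) (j : Fin (N + 1)) : A 0 j = 0 ∨ A 0 j = 1 := by
  have := h.2.2.1 0 j
  rwa [sum_filter_le_eq_prefixSum_add, prefixSum_zero, zero_add] at this

theorem IsASM.left_col (h : IsASM A) (i : Fin (N + 1)) : A i 0 = 0 ∨ A i 0 = 1 := by
  have := h.2.1 i 0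
  rwa [sum_filter_le_eq_prefixSum_add, prefixSum_zero, zero_add] at this

theorem IsASM.prefixSum_bottom_row (h : IsASM A) (j : Fin (N + 1)) :
    prefixSum (fun i' => A i' j) (Fin.last N) + A (Fin.last N) j = 1 := by
  rw [prefixSum_last_add (fun i' => A i' j), h.2.2.2.2]

theorem IsASM.bottom_row (h : IsASM A) (j : Fin (N + 1)) :
    A (Fin.last N) j = 0 ∨ A (Fin.last N) j = 1 := by
  have last := h.prefixSum_bottom_row j
  have col_mem := h.prefixSum_col (Fin.last N) j
  omega

open Classical in
theorem IsASM.rhoT_eq_card (h : IsASM A) :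
    rhoT A = (univ.filter fun j => IsInversion A 0 j).card := by
  refine congrArg card (filter_congr fun j _ => ?_)
  change A 0 j = 0 ∧ (∃ j', j < j' ∧ A 0 j' = 1) ↔ _
  rw [IsInversion, prefixSum_zero, eq_self, and_true]
  exact and_congr_right (exists_gt_eq_one_iff h.top_row (h.2.2.2.1 0))

open Classical in
theorem IsASM.rhoL_eq_card (h : IsASM A) :
    rhoL A = (univ.filter fun i => IsInversion A i 0).card := by
  refine congrArg card (filter_congr fun i _ => ?_)
  change A i 0 = 0 ∧ (∃ i', i < i' ∧ A i' 0 = 1) ↔ _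
  rw [IsInversion, prefixSum_zero, eq_self, true_and]
  exact and_congr_right (exists_gt_eq_one_iff h.left_col (h.2.2.2.2 0))

theorem IsASM.rhoB_eq_card (h : IsASM A) :
    rhoB A = (univ.filter fun j => A (Fin.last N) j = 0 ∧
      prefixSum (A (Fin.last N)) j = 1).card := by
  refine congrArg card (filter_congr fun j _ => ?_)
  change A (Fin.last N) j = 0 ∧ (∃ j', j' < j ∧ A (Fin.last N) j' = 1) ↔ _
  exact and_congr_right (exists_lt_eq_one_iff h.bottom_row (h.2.2.2.1 _))

end Statistics

section RefinedWeight

variable {R : Type*} [CommRing R] {N : ℕ}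

/-- The vertices whose weights record the statistics of alternating sign matrices: `x` and `y`
record `nuASM` and `muASM`, and `z₁`, `z₂`, `z₃` record `rhoT`, `rhoB`, `rhoL`. The extra weights
`c₁` and `c₂` are attached to vanishing entries in the upper left and the lower left corner. -/
def refinedVertex (x y z₁ z₂ z₃ c₁ c₂ : R) (i j : Fin (N + 1)) : Vertex R where
  w00 := x * (if i = 0 then z₁ else 1) * (if j = 0 then z₃ else 1) *
    (if i = 0 ∧ j = 0 then c₁ else 1)
  w11 := if i = Fin.last N then z₂ else 1
  w01 := if i = Fin.last N ∧ j = 0 then c₂ else 1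
  w10 := 1
  one := 1
  neg := y

variable (x y z₁ z₂ z₃ c₁ c₂ : R) {e : Fin (N + 1) → Fin (N + 1) → Fin 3}
    (h : IsASM (asmMat e))

include h

open Classical in
theorem IsASM.weight_refinedVertex (i j : Fin (N + 1)) :
    (refinedVertex x y z₁ z₂ z₃ c₁ c₂ i j).weight (prefixSum (asmMat e i) j)
        (prefixSum (fun i' => asmMat e i' j) i) (e i j) =
      (if IsInversion (asmMat e) i j then x else 1) * (if asmMat e i j = -1 then y else 1) *
      (if i = 0 then if IsInversion (asmMat e) i j then z₁ else 1 else 1) *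
      (if i = Fin.last N then
        if asmMat e i j = 0 ∧ prefixSum (asmMat e i) j = 1 then z₂ else 1 else 1) *
      (if j = 0 then if IsInversion (asmMat e) i j then z₃ else 1 else 1) *
      (if i = 0 then if j = 0 then if asmMat e i j = 0 then c₁ else 1 else 1 else 1) *
      (if i = Fin.last N then if j = 0 then if asmMat e i j = 0 then c₂ else 1 else 1
        else 1) := by
  have col_zero : i = 0 → prefixSum (fun i' => asmMat e i' j) i = 0 := by
    rintro rfl
    exact prefixSum_zero _
  have row_zero : j = 0 → prefixSum (asmMat e i) j = 0 := by
    rintro rfl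
    exact prefixSum_zero _
  have col_last : i = Fin.last N → prefixSum (fun i' => asmMat e i' j) i + asmMat e i j = 1 := by
    rintro rfl
    exact h.prefixSum_bottom_row j
  rw [IsInversion]
  rcases h.local_cases i j with ⟨hA, hr | hr, hc | hc⟩ | ⟨hA, hr, hc⟩ | ⟨hA, hr, hc⟩ <;>
    [have he := asmMat_eq_zero.1 hA; have he := asmMat_eq_zero.1 hA;
      have he := asmMat_eq_zero.1 hA; have he := asmMat_eq_zero.1 hA;
      have he := asmMat_eq_one.1 hA; have he := asmMat_eq_neg_one.1 hA] <;>
    simp only [hA, hr, hc] at col_zero row_zero col_last <;>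
    by_cases hi : i = 0 <;> by_cases hj : j = 0 <;> by_cases hi' : i = Fin.last N <;>
    simp only [hA, hr, hc, he, hi, hj, hi', Vertex.weight, refinedVertex] <;>
    simp_all

open Classical in
theorem IsASM.asmWeight_refinedVertex :
    asmWeight (refinedVertex x y z₁ z₂ z₃ c₁ c₂) e =
      x ^ nuASM (asmMat e) * y ^ muASM (asmMat e) * z₁ ^ rhoT (asmMat e) *
        z₂ ^ rhoB (asmMat e) * z₃ ^ rhoL (asmMat e) *
        (if asmMat e 0 0 = 0 then c₁ else 1) *
        (if asmMat e (Fin.last N) 0 = 0 then c₂ else 1) := by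
  have prod_ite_eq_pow (P : Fin (N + 1) → Prop) [DecidablePred P] (a : R) :
      (∏ j, if P j then a else 1) = a ^ (univ.filter P).card := by
    rw [← prod_filter, prod_const]
  have prod_inversion : (∏ i, ∏ j, if IsInversion (asmMat e) i j then x else 1) =
      x ^ nuASM (asmMat e) := by
    simp only [h.nuASM_eq_sum, prod_ite_eq_pow, prod_pow_eq_pow_sum, card_filter]
  have prod_neg_one : (∏ i, ∏ j, if asmMat e i j = -1 then y else 1) = y ^ muASM (asmMat e) := by
    simp only [muASM, prod_ite_eq_pow, prod_pow_eq_pow_sum, card_filter]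
    rw [Fintype.sum_prod_type]
  have prod_row (k : Fin (N + 1)) (f : Fin (N + 1) → Fin (N + 1) → R) :
      (∏ i, ∏ j, if i = k then f i j else 1) = ∏ j, f k j := by
    rw [prod_comm]
    simp
  have prod_col (k : Fin (N + 1)) (f : Fin (N + 1) → Fin (N + 1) → R) :
      (∏ i, ∏ j, if j = k then f i j else 1) = ∏ i, f i k := by
    simp
  simp only [asmWeight, h.weight_refinedVertex, prod_mul_distrib]
  rw [prod_inversion, prod_neg_one, prod_row 0, prod_row (Fin.last N), prod_col 0, prod_row 0,
    prod_row (Fin.last N)]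
  simp only [prod_ite_eq_pow, h.rhoT_eq_card, h.rhoB_eq_card, h.rhoL_eq_card, prod_ite_eq',
    mem_univ, if_true]

end RefinedWeight

section Rotation

/-- The rotation of a matrix by a half-turn. -/
def halfTurn {n : ℕ} {α : Type*} (A : Fin n → Fin n → α) : Fin n → Fin n → α :=
  fun i j => A i.rev j.rev

theorem halfTurn_halfTurn {n : ℕ} {α : Type*} (A : Fin n → Fin n → α) :
    halfTurn (halfTurn A) = A := by
  funext i j
  simp [halfTurn]

theorem asmMat_halfTurn {n : ℕ} (e : Fin n → Fin n → Fin 3) :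
    asmMat (halfTurn e) = halfTurn (asmMat e) := rfl

theorem sum_filter_le_rev {n : ℕ} {a : Fin n → ℤ} (ha : ∑ j, a j = 1) (j : Fin n) :
    ∑ j' ∈ univ.filter (fun j' => j' ≤ j), a j'.rev = 1 - prefixSum a j.rev := by
  rw [← sum_ite_le_eq _ ha, sum_filter, ← Equiv.sum_comp Fin.revPerm]
  simp [Fin.rev_le_iff]

theorem isASM_halfTurn {n : ℕ} {A : Fin n → Fin n → ℤ} (h : IsASM A) : IsASM (halfTurn A) := by
  refine ⟨fun i j => h.1 _ _, fun i j => ?_, fun i j => ?_, fun i => ?_, fun j => ?_⟩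
  · have row_mem := h.prefixSum_row i.rev j.rev
    have row_rev := sum_filter_le_rev (h.2.2.2.1 i.rev) j
    simp only [halfTurn]
    omega
  · have col_mem := h.prefixSum_col i.rev j.rev
    have col_rev := sum_filter_le_rev (h.2.2.2.2 j.rev) i
    simp only [halfTurn]
    omega
  · rw [← h.2.2.2.1 i.rev]
    exact Equiv.sum_comp Fin.revPerm (A i.rev)
  · rw [← h.2.2.2.2 j.rev]
    exact Equiv.sum_comp Fin.revPerm fun i => A i j.rev

theorem isASM_halfTurn_iff {n : ℕ} {A : Fin n → Fin n → ℤ} : IsASM (halfTurn A) ↔ IsASM A :=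
  ⟨fun h => halfTurn_halfTurn A ▸ isASM_halfTurn h, isASM_halfTurn⟩

theorem nuASM_halfTurn {n : ℕ} (A : Fin n → Fin n → ℤ) : nuASM (halfTurn A) = nuASM A := by
  have sum_rev (f : Fin n → ℤ) : ∑ i, f i = ∑ i : Fin n, f i.rev :=
    (Equiv.sum_comp Fin.revPerm f).symm
  rw [nuASM, nuASM, sum_comm, sum_rev]
  refine congrArg Int.toNat (sum_congr rfl fun i _ => ?_)
  rw [sum_rev]
  refine sum_congr rfl fun i' _ => ?_
  rw [sum_comm, sum_rev]
  refine sum_congr rfl fun j _ => ?_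
  rw [sum_rev]
  refine sum_congr rfl fun j' _ => ?_
  simp [halfTurn, mul_comm]

theorem muASM_halfTurn {n : ℕ} (A : Fin n → Fin n → ℤ) : muASM (halfTurn A) = muASM A :=
  card_equiv (Fin.revPerm.prodCongr Fin.revPerm) fun p => by
    simp only [mem_filter, mem_univ, true_and]
    exact Iff.rfl

variable {N : ℕ} (A : Fin (N + 1) → Fin (N + 1) → ℤ)

theorem card_filter_exists_gt_rev (a : Fin (N + 1) → ℤ) :
    (univ.filter fun j : Fin (N + 1) => a j.rev = 0 ∧ ∃ j', j < j' ∧ a j'.rev = 1).card =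
      (univ.filter fun j => a j = 0 ∧ ∃ j', j' < j ∧ a j' = 1).card := by
  refine card_equiv Fin.revPerm fun j => ?_
  simp only [mem_filter, mem_univ, true_and, Fin.revPerm_apply]
  rw [Fin.revPerm.surjective.exists (p := fun j' => j' < j.rev ∧ a j' = 1)]
  simp

theorem rhoT_halfTurn : rhoT (halfTurn A) = rhoB A := by
  refine Eq.trans ?_ (card_filter_exists_gt_rev (A (Fin.last N)))
  rw [← Fin.rev_zero]
  rfl

theorem rhoL_halfTurn : rhoL (halfTurn A) = rhoR A := by
  refine Eq.trans ?_ (card_filter_exists_gt_rev fun i => A i (Fin.last N))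
  rw [← Fin.rev_zero]
  rfl

theorem rhoB_halfTurn : rhoB (halfTurn A) = rhoT A := by
  rw [← rhoT_halfTurn, halfTurn_halfTurn]

theorem rhoR_halfTurn : rhoR (halfTurn A) = rhoL A := by
  rw [← rhoL_halfTurn, halfTurn_halfTurn]

theorem Zqua_halfTurn {R : Type*} [CommRing R] (x y z₁ z₂ z₃ z₄ : R) :
    Zqua (N + 1) x y z₁ z₂ z₃ z₄ = Zqua (N + 1) x y z₃ z₄ z₁ z₂ := by
  have involutive : Function.Involutive
      (halfTurn : (Fin (N + 1) → Fin (N + 1) → Fin 3) → _) := halfTurn_halfTurn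
  rw [Zqua, Zqua, ← Equiv.sum_comp involutive.toPerm]
  refine sum_congr rfl fun e _ => ?_
  rw [Function.Involutive.coe_toPerm, asmMat_halfTurn, nuASM_halfTurn, muASM_halfTurn,
    rhoT_halfTurn, rhoR_halfTurn, rhoB_halfTurn, rhoL_halfTurn, propext isASM_halfTurn_iff]
  split_ifs
  · ring
  · rfl

end Rotation

section RefinedSum

variable {R : Type*} [CommRing R] {N : ℕ}

/-- The partition function of the vertex weights `refinedVertex`. -/
def refinedSum (N : ℕ) (x y z₁ z₂ z₃ c₁ c₂ : R) : R :=
  partitionFn (refinedVertex x y z₁ z₂ z₃ c₁ c₂) (List.ofFn (id : Fin (N + 1) → _))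
    (List.ofFn (id : Fin (N + 1) → _)) (List.replicate (N + 1) false)

variable (x y z₁ z₂ z₃ c₁ c₂ : R)

open Classical in
theorem refinedSum_eq_sum_asmWeight :
    refinedSum N x y z₁ z₂ z₃ c₁ c₂ = ∑ e : Fin (N + 1) → Fin (N + 1) → Fin 3,
      if IsASM (asmMat e) then asmWeight (refinedVertex x y z₁ z₂ z₃ c₁ c₂) e else 0 :=
  partitionFn_eq_sum_asmWeight _ _ _

theorem refinedSum_one_one : refinedSum N x y z₁ z₂ z₃ 1 1 = Ztri (N + 1) x y z₁ z₂ z₃ := by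
  rw [refinedSum_eq_sum_asmWeight, Ztri, Zqua]
  refine sum_congr rfl fun e _ => ?_
  split_ifs with h
  · simp [h.asmWeight_refinedVertex x y z₁ z₂ z₃ 1 1]
  · rfl

theorem IsASM.bottom_left_eq_zero {A : Fin (N + 2) → Fin (N + 2) → ℤ} (h : IsASM A)
    (top_left : A 0 0 ≠ 0) : A (Fin.last (N + 1)) 0 = 0 := by
  have top_left_eq := (h.left_col 0).resolve_left top_left
  have inner_nonneg : 0 ≤ ∑ i : Fin N, A i.castSucc.succ 0 := sum_nonneg fun i _ => by
    have := h.left_col i.castSucc.succ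
    omega
  refine (h.left_col _).resolve_right fun bottom_left_eq => ?_
  have col_sum := h.2.2.2.2 0
  rw [Fin.sum_univ_succ, Fin.sum_univ_castSucc, Fin.succ_last, top_left_eq, bottom_left_eq]
    at col_sum
  omega

theorem refinedSum_corners :
    refinedSum (N + 1) x y z₁ z₂ z₃ c₁ c₂ =
      c₁ * c₂ * refinedSum (N + 1) x y z₁ z₂ z₃ 1 1 +
        c₂ * (1 - c₁) * refinedSum (N + 1) x y z₁ z₂ z₃ 0 1 +
        c₁ * (1 - c₂) * refinedSum (N + 1) x y z₁ z₂ z₃ 1 0 := by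
  simp only [refinedSum_eq_sum_asmWeight, mul_sum, ← sum_add_distrib]
  refine sum_congr rfl fun e _ => ?_
  split_ifs with h
  · simp only [h.asmWeight_refinedVertex]
    by_cases top_left : asmMat e 0 0 = 0
    · simp only [if_pos top_left]
      split_ifs <;> ring
    · simp only [if_neg top_left, if_pos (h.bottom_left_eq_zero top_left)]
      ring
  · simp

theorem refinedSum_zero_one :
    refinedSum (N + 1) x y z₁ z₂ z₃ 0 1 = refinedSum N x y 1 z₂ 1 1 1 := by
  have minor : (fun i j : Fin (N + 1) => refinedVertex x y z₁ z₂ z₃ 0 1 i.succ j.succ) =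
      refinedVertex x y 1 z₂ 1 1 1 := by
    funext i j
    simp [refinedVertex, Fin.succ_eq_last_succ]
  have reduce := partitionFn_of_w00_eq_zero (refinedVertex x y z₁ z₂ z₃ 0 1) (0 : Fin (N + 2))
    (List.ofFn Fin.succ) 0 (List.ofFn Fin.succ) (by simp [refinedVertex])
  rw [List.length_ofFn, partitionFn_eq_sum_asmWeight, minor, ← refinedSum_eq_sum_asmWeight]
    at reduce
  rw [refinedSum, List.ofFn_succ]
  refine reduce.trans ?_
  simp [refinedVertex, List.map_ofFn, Function.comp_def]

theorem refinedSum_one_zero :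
    refinedSum (N + 1) x y z₁ z₂ z₃ 1 0 =
      x ^ (N + 1) * z₁ * z₂ ^ (N + 1) * z₃ ^ (N + 1) * refinedSum N x y z₁ 1 1 1 1 := by
  have minor : (fun i j : Fin (N + 1) => refinedVertex x y z₁ z₂ z₃ 1 0 i.castSucc j.succ) =
      refinedVertex x y z₁ 1 1 1 1 := by
    funext i j
    simp [refinedVertex, (Fin.castSucc_lt_last _).ne]
  have reduce := partitionFn_of_w01_eq_zero (refinedVertex x y z₁ z₂ z₃ 1 0) (Fin.last (N + 1))
    (List.ofFn Fin.castSucc) 0 (List.ofFn Fin.succ) (List.replicate (N + 1) false)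
    (by simp [refinedVertex])
  rw [partitionFn_eq_sum_asmWeight, minor, ← refinedSum_eq_sum_asmWeight] at reduce
  have bottom_row_prod : ((List.ofFn Fin.succ).map fun j : Fin (N + 2) =>
      (refinedVertex x y z₁ z₂ z₃ 1 0 (Fin.last (N + 1)) j).w11).prod = z₂ ^ (N + 1) := by
    simp [refinedVertex, List.map_ofFn, Function.comp_def, pow_succ']
  have left_col_prod : ((List.ofFn Fin.castSucc).map fun i : Fin (N + 2) =>
      (refinedVertex x y z₁ z₂ z₃ 1 0 i 0).w00).prod = x * z₁ * z₃ * (x * z₃) ^ N := by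
    simp [refinedVertex, List.map_ofFn, Function.comp_def]
  have rows : List.ofFn (id : Fin (N + 2) → _) = List.ofFn Fin.castSucc ++ [Fin.last (N + 1)] := by
    rw [List.ofFn_succ', List.concat_eq_append]
    rfl
  have cols : List.ofFn (id : Fin (N + 2) → _) = 0 :: List.ofFn Fin.succ := List.ofFn_succ
  rw [refinedSum]
  refine (congrArg₂ (fun us vs => partitionFn (refinedVertex x y z₁ z₂ z₃ 1 0) us vs _)
    rows cols).trans (reduce.trans ?_)
  rw [bottom_row_prod, left_col_prod, refinedVertex]
  ring

theorem refinedSum_succ :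
    refinedSum (N + 1) x y z₁ z₂ z₃ c₁ c₂ =
      c₁ * c₂ * Ztri (N + 2) x y z₁ z₂ z₃ + c₂ * (1 - c₁) * Zsing (N + 1) x y z₂ +
        c₁ * (1 - c₂) * (x ^ (N + 1) * z₁ * z₂ ^ (N + 1) * z₃ ^ (N + 1)) *
          Zsing (N + 1) x y z₁ := by
  have bottom : Ztri (N + 1) x y 1 z₂ 1 = Zsing (N + 1) x y z₂ := Zqua_halfTurn ..
  rw [refinedSum_corners, refinedSum_zero_one, refinedSum_one_zero, refinedSum_one_one,
    refinedSum_one_one, refinedSum_one_one, bottom]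
  change _ + _ + _ * (_ * Zsing (N + 1) x y z₁) = _
  ring

end RefinedSum

section RowParameters

variable {R : Type*} [CommRing R] {N : ℕ}

/-- The row parameters: `r` in the top row, `s` in the bottom row, and `1` in all other rows. -/
def rowParam (N : ℕ) (r s : R) (i : Fin (N + 1)) : R :=
  if i = 0 then r else if i = Fin.last N then s else 1

theorem coe_ofFn_rowParam_succ (m : ℕ) (r s : R) :
    (List.ofFn (rowParam (m + 1) r s) : Multiset R) = r ::ₘ s ::ₘ Multiset.replicate m 1 := by
  have middle (i : Fin m) : rowParam (m + 1) r s i.castSucc.succ = 1 := by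
    simp [rowParam, Fin.ext_iff, i.is_lt.ne]
  rw [List.ofFn_succ, List.ofFn_succ', List.concat_eq_append]
  simp only [middle, List.ofFn_const, ← Multiset.coe_replicate, Multiset.cons_coe]
  refine Multiset.coe_eq_coe.2 ?_
  simp [rowParam]

theorem ofFn_rowParam_one (m : ℕ) (r : R) :
    List.ofFn (rowParam m r 1) = r :: List.replicate m 1 := by
  rw [List.ofFn_succ, ← List.ofFn_const]
  simp [rowParam]

theorem ofFn_single_zero (m : ℕ) (t : R) :
    List.ofFn (Pi.single 0 t : Fin (m + 1) → R) = t :: List.replicate m 0 := by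
  rw [List.ofFn_succ, ← List.ofFn_const]
  simp

theorem straightWeight_zero (x d u : R) : straightWeight x d u 0 = 1 := by
  simp [straightWeight]

theorem straightWeight_one_one (x y : R) : straightWeight x (1 + x - y) 1 1 = y := by
  rw [straightWeight]
  ring

variable {x y z₁ z₂ z₃ c₁ c₂ b t : R}

theorem sixVertex_w00_eq {d : R} {i : Fin (N + 1)} (hi : i ≠ Fin.last N) (j : Fin (N + 1))
    (left : 1 - t = b * z₃) (top_left : z₁ - t = b * (z₁ * z₃ * c₁)) :
    (sixVertex x d (rowParam N z₁ z₂ i) ((Pi.single 0 t : Fin (N + 1) → R) j)).w00 =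
      (if j = 0 then b else 1) * (refinedVertex x y z₁ z₂ z₃ c₁ c₂ i j).w00 := by
  by_cases hj : j = 0 <;> by_cases hi' : i = 0 <;>
    simp only [sixVertex, refinedVertex, rowParam, hi, hi', hj, if_true, if_false, and_true,
      and_self, and_false, Pi.single_eq_same, ne_eq, not_false_eq_true, Pi.single_eq_of_ne,
      sub_zero, left, top_left] <;>
    ring

theorem sixVertex_w01_eq {i : Fin (N + 1)} (hi : i ≠ 0) (j : Fin (N + 1))
    (b_eq : straightWeight x (1 + x - y) 1 t = b)
    (bottom_left : straightWeight x (1 + x - y) z₂ t = b * c₂) :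
    (sixVertex x (1 + x - y) (rowParam N z₁ z₂ i) ((Pi.single 0 t : Fin (N + 1) → R) j)).w01 =
      (if j = 0 then b else 1) * (refinedVertex x y z₁ z₂ z₃ c₁ c₂ i j).w01 := by
  have param : rowParam N z₁ z₂ i = if i = Fin.last N then z₂ else 1 := if_neg hi
  simp only [sixVertex, refinedVertex, param]
  by_cases hj : j = 0 <;> by_cases hi' : i = Fin.last N <;>
    simp [hi', hj, straightWeight_zero, b_eq, bottom_left]

end RowParameters

section Gauge

variable {K : Type*} [Field K] {N : ℕ}

theorem prod_zpow_eq_zpow_sum {ι : Type*} (s : Finset ι) (f : ι → ℤ) {a : K} (ha : a ≠ 0) :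
    ∏ i ∈ s, a ^ f i = a ^ ∑ i ∈ s, f i := by
  classical
  induction s using Finset.induction_on with
  | empty => simp
  | insert i s hi ih => rw [prod_insert hi, sum_insert hi, ih, zpow_add₀ ha]

theorem IsASM.asmWeight_eq_of_gauge {W W' : Fin (N + 1) → Fin (N + 1) → Vertex K}
    {l α : Fin (N + 1) → K} (hl : ∀ j, l j ≠ 0) (hα : ∀ i, α i ≠ 0)
    {e : Fin (N + 1) → Fin (N + 1) → Fin 3} (h : IsASM (asmMat e))
    (hW : ∀ i j, (W' i j).weight (prefixSum (asmMat e i) j)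
        (prefixSum (fun i' => asmMat e i' j) i) (e i j) =
      l j * (α i ^ asmMat e i j / l j ^ asmMat e i j) * (W i j).weight (prefixSum (asmMat e i) j)
        (prefixSum (fun i' => asmMat e i' j) i) (e i j)) :
    asmWeight W' e = (∏ j, l j) ^ N * (∏ i, α i) * asmWeight W e := by
  have prod_row : ∏ i, ∏ j, α i ^ asmMat e i j = ∏ i, α i := by
    simp only [prod_zpow_eq_zpow_sum _ _ (hα _), h.2.2.2.1, zpow_one]
  have prod_col : ∏ i, ∏ j, l j ^ asmMat e i j = ∏ j, l j := by
    rw [prod_comm]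
    simp only [prod_zpow_eq_zpow_sum _ _ (hl _), h.2.2.2.2, zpow_one]
  have prod_ne_zero : ∏ j, l j ≠ 0 := prod_ne_zero_iff.2 fun j _ => hl j
  simp only [asmWeight, hW, prod_mul_distrib, prod_div_distrib, prod_row, prod_col, prod_const,
    card_univ, Fintype.card_fin]
  field_simp
  ring

variable {x y z₁ z₂ z₃ c₁ c₂ b t : K}

theorem IsASM.weight_sixVertex {e : Fin (N + 1) → Fin (N + 1) → Fin 3} (h : IsASM (asmMat e))
    (hy : y ≠ 0) (hb : b ≠ 0) (b_eq : straightWeight x (1 + x - y) 1 t = b)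
    (left : 1 - t = b * z₃) (top_left : z₁ - t = b * (z₁ * z₃ * c₁))
    (bottom_left : straightWeight x (1 + x - y) z₂ t = b * c₂) (i j : Fin (N + 1)) :
    (sixVertex x (1 + x - y) (rowParam N z₁ z₂ i)
        ((Pi.single 0 t : Fin (N + 1) → K) j)).weight
        (prefixSum (asmMat e i) j) (prefixSum (fun i' => asmMat e i' j) i) (e i j) =
      (if j = 0 then b else 1) *
      (straightWeight x (1 + x - y) (rowParam N z₁ z₂ i) (rowParam N z₁ z₂ i) ^ asmMat e i j /
        (if j = 0 then b else 1) ^ asmMat e i j) *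
      (refinedVertex x y z₁ z₂ z₃ c₁ c₂ i j).weight (prefixSum (asmMat e i) j)
        (prefixSum (fun i' => asmMat e i' j) i) (e i j) := by
  have top : prefixSum (fun i' => asmMat e i' j) i = 1 → i ≠ 0 := by
    rintro hi rfl
    simp [prefixSum_zero] at hi
  have left_edge : prefixSum (asmMat e i) j = 1 → j ≠ 0 := by
    rintro hj rfl
    simp [prefixSum_zero] at hj
  have bottom : prefixSum (fun i' => asmMat e i' j) i + asmMat e i j ≠ 1 → i ≠ Fin.last N :=
    fun hi hi' => hi (hi' ▸ h.prefixSum_bottom_row j)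
  rcases h.local_cases i j with ⟨hA, hr | hr, hc | hc⟩ | ⟨hA, hr, hc⟩ | ⟨hA, hr, hc⟩
  · have w00 := sixVertex_w00_eq (x := x) (d := 1 + x - y) (y := y) (c₂ := c₂) (z₂ := z₂)
      (bottom (by simp [hA, hc])) j left top_left
    rw [hA, hr, hc, asmMat_eq_zero.1 hA]
    simpa [Vertex.weight] using w00
  · have w01 := sixVertex_w01_eq (z₁ := z₁) (z₃ := z₃) (c₁ := c₁) (top hc) j b_eq bottom_left
    rw [hA, hr, hc, asmMat_eq_zero.1 hA]
    simpa [Vertex.weight] using w01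
  · rw [hA, hr, hc, asmMat_eq_zero.1 hA]
    simp [Vertex.weight, sixVertex, refinedVertex, left_edge hr, straightWeight_zero]
  · have param : rowParam N z₁ z₂ i = if i = Fin.last N then z₂ else 1 := if_neg (top hc)
    rw [hA, hr, hc, asmMat_eq_zero.1 hA]
    simp [Vertex.weight, sixVertex, refinedVertex, param, left_edge hr]
  · rw [hA, hr, hc, asmMat_eq_one.1 hA]
    by_cases hj : j = 0 <;>
      simp [Vertex.weight, sixVertex, refinedVertex, hj, mul_div_cancel₀ _ hb]
  · have param : rowParam N z₁ z₂ i = 1 := by simp [rowParam, top hc, bottom (by simp [hA, hc])]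
    rw [hA, hr, hc, asmMat_eq_neg_one.1 hA]
    simp [Vertex.weight, sixVertex, refinedVertex, param, left_edge hr, hy, straightWeight_zero,
      straightWeight_one_one]

theorem domainWall_eq_refinedSum (hy : y ≠ 0) (hb : b ≠ 0)
    (hz₁ : straightWeight x (1 + x - y) z₁ z₁ ≠ 0) (hz₂ : straightWeight x (1 + x - y) z₂ z₂ ≠ 0)
    (b_eq : straightWeight x (1 + x - y) 1 t = b) (left : 1 - t = b * z₃)
    (top_left : z₁ - t = b * (z₁ * z₃ * c₁))
    (bottom_left : straightWeight x (1 + x - y) z₂ t = b * c₂) :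
    domainWall x (1 + x - y) (List.ofFn (rowParam N z₁ z₂) : Multiset K)
        (List.ofFn (Pi.single 0 t : Fin (N + 1) → K)) =
      b ^ N * (((List.ofFn (rowParam N z₁ z₂) : Multiset K).map fun u =>
        straightWeight x (1 + x - y) u u).prod * refinedSum N x y z₁ z₂ z₃ c₁ c₂) := by
  have turn_ne_zero (i : Fin (N + 1)) :
      straightWeight x (1 + x - y) (rowParam N z₁ z₂ i) (rowParam N z₁ z₂ i) ≠ 0 := by
    rw [rowParam]
    split_ifs
    exacts [hz₁, hz₂, by rwa [straightWeight_one_one]]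
  have prod_col : ∏ j : Fin (N + 1), (if j = 0 then b else 1) = b := by simp
  have prod_row : ((List.ofFn (rowParam N z₁ z₂) : Multiset K).map fun u =>
      straightWeight x (1 + x - y) u u).prod =
      ∏ i, straightWeight x (1 + x - y) (rowParam N z₁ z₂ i) (rowParam N z₁ z₂ i) := by
    rw [Multiset.map_coe, Multiset.prod_coe, List.map_ofFn, List.prod_ofFn]
    rfl
  rw [domainWall_coe, List.length_ofFn, partitionFn_eq_sum_asmWeight, refinedSum_eq_sum_asmWeight,
    prod_row, ← mul_assoc, mul_sum]
  refine sum_congr rfl fun e _ => ?_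
  split_ifs with h
  · rw [h.asmWeight_eq_of_gauge (l := fun j => if j = 0 then b else 1)
      (fun j => by split_ifs <;> simp [hb]) turn_ne_zero
      (h.weight_sixVertex hy hb b_eq left top_left bottom_left), prod_col]
  · rw [mul_zero]

theorem domainWall_cons_cons (m : ℕ) (hy : y ≠ 0) (hb : b ≠ 0)
    (hz₁ : straightWeight x (1 + x - y) z₁ z₁ ≠ 0) (hz₂ : straightWeight x (1 + x - y) z₂ z₂ ≠ 0)
    (b_eq : straightWeight x (1 + x - y) 1 t = b) (left : 1 - t = b * z₃)
    (top_left : z₁ - t = b * (z₁ * z₃ * c₁))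
    (bottom_left : straightWeight x (1 + x - y) z₂ t = b * c₂) :
    domainWall x (1 + x - y) (z₁ ::ₘ z₂ ::ₘ Multiset.replicate m 1)
        (t :: List.replicate (m + 1) 0) =
      b ^ (m + 1) * (straightWeight x (1 + x - y) z₁ z₁ * (straightWeight x (1 + x - y) z₂ z₂ *
        y ^ m) * refinedSum (m + 1) x y z₁ z₂ z₃ c₁ c₂) := by
  rw [← coe_ofFn_rowParam_succ, ← ofFn_single_zero,
    domainWall_eq_refinedSum hy hb hz₁ hz₂ b_eq left top_left bottom_left, coe_ofFn_rowParam_succ]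
  simp [straightWeight_one_one]

theorem domainWall_cons (m : ℕ) (hy : y ≠ 0) {u : K} (hu : straightWeight x (1 + x - y) u u ≠ 0) :
    domainWall x (1 + x - y) (u ::ₘ Multiset.replicate m 1) (List.replicate (m + 1) 0) =
      straightWeight x (1 + x - y) u u * y ^ m * Zsing (m + 1) x y u := by
  have homogeneous := domainWall_eq_refinedSum (N := m) (x := x) (z₁ := u) (z₂ := 1) (z₃ := 1)
    (c₁ := 1) (c₂ := 1) (t := 0) hy one_ne_zero hu (by rwa [straightWeight_one_one])
    (straightWeight_zero ..) (by simp) (by simp) (by simp [straightWeight_zero])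
  rw [ofFn_rowParam_one, ofFn_single_zero, ← Multiset.cons_coe, Multiset.coe_replicate,
    refinedSum_one_one] at homogeneous
  refine homogeneous.trans ?_
  simp [straightWeight_one_one, Ztri, Zsing]

theorem refinedSum_threeTerm (m : ℕ) (hy : y ≠ 0) (hb : b ≠ 0)
    (hz₁ : straightWeight x (1 + x - y) z₁ z₁ ≠ 0) (hz₂ : straightWeight x (1 + x - y) z₂ z₂ ≠ 0)
    (b_eq : straightWeight x (1 + x - y) 1 t = b) (left : 1 - t = b * z₃)
    (top_left : z₁ - t = b * (z₁ * z₃ * c₁))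
    (bottom_left : straightWeight x (1 + x - y) z₂ t = b * c₂) :
    (z₁ - z₂) * (straightWeight x (1 + x - y) 1 t * (1 - t)) *
        (refinedSum (m + 1) x y z₁ z₂ z₃ c₁ c₂ * Zun (m + 1) x y) +
      (z₂ - 1) * (straightWeight x (1 + x - y) z₁ t * (z₁ - t)) *
        (refinedSum (m + 1) x y 1 z₂ z₃ 1 c₂ * Zsing (m + 1) x y z₁) +
      (1 - z₁) * (straightWeight x (1 + x - y) z₂ t * (z₂ - t)) *
        (refinedSum (m + 1) x y z₁ 1 z₃ c₁ 1 * Zsing (m + 1) x y z₂) = 0 := by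
  have h_one : straightWeight x (1 + x - y) 1 1 ≠ 0 := by rwa [straightWeight_one_one]
  have three_term := threeTerm_eq_zero x (1 + x - y) z₁ z₂ 1 t (Multiset.replicate m 1)
    (List.replicate (m + 1) 0)
  rw [threeTerm, domainWall_cons_cons m hy hb hz₁ hz₂ b_eq left top_left bottom_left,
    Multiset.cons_swap z₂, domainWall_cons_cons m hy hb h_one hz₂ b_eq left (c₁ := 1) (by simpa)
      bottom_left, Multiset.cons_swap 1,
    domainWall_cons_cons m hy hb hz₁ h_one b_eq left (c₂ := 1) top_left (by simpa),
    domainWall_cons m hy hz₁, domainWall_cons m hy hz₂, domainWall_cons m hy h_one,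
    straightWeight_one_one] at three_term
  have common_ne_zero : b ^ (m + 1) * straightWeight x (1 + x - y) z₁ z₁ *
      straightWeight x (1 + x - y) z₂ z₂ * y ^ (2 * m + 1) ≠ 0 := by
    simp [hb, hz₁, hz₂, hy]
  refine (mul_eq_zero.1 ?_).resolve_left common_ne_zero
  change _ * (_ * (_ * Zsing (m + 1) x y 1) + _ + _) = 0
  linear_combination three_term

end Gauge

section Identity

/-- The difference of the two sides of the identity between the refined generating functions of
the sizes `m + 2` and `m + 1`. -/
noncomputable def triDefect {R : Type*} [CommRing R] (m : ℕ) (x y z₁ z₂ z₃ : R) : R :=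
  y * (z₂ - z₁) * z₃ * Ztri (m + 2) x y z₁ z₂ z₃ * Zun (m + 1) x y -
    ((z₁ - 1) * ((z₂ - 1) * (z₃ - 1) - y * z₂ * z₃) *
        Zadj (m + 2) x y z₁ z₃ * Zsing (m + 1) x y z₂
      - (z₂ - 1) * (x * (z₁ - 1) * (z₃ - 1) - y) * z₁ * z₃ *
        Zbaradj (m + 2) x y z₂ z₃ * Zsing (m + 1) x y z₁
      - (z₁ - 1) * (z₂ - 1) * (z₃ - 1) * Zsing (m + 1) x y z₂ * Zun (m + 1) x y
      + (z₁ - 1) * (z₂ - 1) * (z₃ - 1) * z₁ * z₂ ^ (m + 1) * (x * z₃) ^ (m + 2) *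
        Zsing (m + 1) x y z₁ * Zun (m + 1) x y)

theorem map_Zqua {R S : Type*} [CommRing R] [CommRing S] (φ : R →+* S) (n : ℕ)
    (x y z₁ z₂ z₃ z₄ : R) :
    φ (Zqua n x y z₁ z₂ z₃ z₄) = Zqua n (φ x) (φ y) (φ z₁) (φ z₂) (φ z₃) (φ z₄) := by
  classical
  simp only [Zqua, map_sum, apply_ite φ, map_mul, map_pow, map_zero]

theorem map_triDefect {R S : Type*} [CommRing R] [CommRing S] (φ : R →+* S) (m : ℕ)
    (x y z₁ z₂ z₃ : R) :
    φ (triDefect m x y z₁ z₂ z₃) = triDefect m (φ x) (φ y) (φ z₁) (φ z₂) (φ z₃) := by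
  simp only [triDefect, Ztri, Zadj, Zbaradj, Zsing, Zun, map_add, map_sub, map_mul, map_pow,
    map_one, map_Zqua]

theorem triDefect_eq_zero_of_ne_zero {K : Type*} [Field K] (m : ℕ) {x y z₁ z₂ z₃ : K}
    (hy : y ≠ 0) (hz₁ : z₁ ≠ 0) (hz₃ : z₃ ≠ 0) (hδ : 1 - (1 - y) * z₃ ≠ 0)
    (h_turn₁ : straightWeight x (1 + x - y) z₁ z₁ ≠ 0)
    (h_turn₂ : straightWeight x (1 + x - y) z₂ z₂ ≠ 0)
    (hc₁ : y * z₁ * z₃ - (z₁ - 1) * (z₃ - 1) ≠ 0) (hc₂ : y - x * (z₂ - 1) * (z₃ - 1) ≠ 0) :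
    triDefect m x y z₁ z₂ z₃ = 0 := by
  obtain ⟨c₁, c₁_eq⟩ : ∃ c₁, y * z₁ * z₃ * c₁ = y * z₁ * z₃ - (z₁ - 1) * (z₃ - 1) :=
    ⟨_, mul_div_cancel₀ _ (by simp [hy, hz₁, hz₃])⟩
  obtain ⟨c₂, c₂_eq⟩ : ∃ c₂, y * c₂ = y - x * (z₂ - 1) * (z₃ - 1) := ⟨_, mul_div_cancel₀ _ hy⟩
  obtain ⟨δ, δ_eq⟩ : ∃ δ, δ = 1 - (1 - y) * z₃ := ⟨_, rfl⟩
  rw [← δ_eq] at hδ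
  rw [← c₁_eq] at hc₁
  rw [← c₂_eq] at hc₂
  have sub_t (u : K) : u - (1 - z₃) / δ = (y * u * z₃ - (u - 1) * (z₃ - 1)) / δ := by
    field_simp
    rw [δ_eq]
    ring
  have straight_t (u : K) : straightWeight x (1 + x - y) u ((1 - z₃) / δ) =
      (y - x * (u - 1) * (z₃ - 1)) / δ := by
    rw [straightWeight]
    field_simp
    rw [δ_eq]
    ring
  have key := refinedSum_threeTerm (x := x) (c₁ := c₁) (c₂ := c₂) (z₃ := z₃) (b := y / δ) m hy
    (div_ne_zero hy hδ) h_turn₁ h_turn₂ (by rw [straight_t]; simp) (by rw [sub_t]; ring)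
    (by rw [sub_t, ← c₁_eq]; ring) (by rw [straight_t, ← c₂_eq]; ring)
  have top_unrefined : Ztri (m + 2) x y 1 z₂ z₃ = Zbaradj (m + 2) x y z₂ z₃ := Zqua_halfTurn ..
  have bottom_unrefined : Ztri (m + 2) x y z₁ 1 z₃ = Zadj (m + 2) x y z₁ z₃ := rfl
  have unrefined : Zsing (m + 1) x y 1 = Zun (m + 1) x y := rfl
  rw [sub_t z₁, straight_t z₂, ← c₁_eq, ← c₂_eq] at key
  simp only [refinedSum_succ, top_unrefined, bottom_unrefined, unrefined, straight_t, sub_t]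
    at key
  field_simp at key
  refine (mul_eq_zero.1 ?_).resolve_left (mul_ne_zero (right_ne_zero_of_mul hc₁) hc₂)
  rw [triDefect]
  linear_combination -key + y * c₂ * (z₂ - 1) * Zun (m + 1) x y * Zsing (m + 1) x y z₂ * c₁_eq -
    y * c₁ * z₁ * z₃ * (x * z₂ * z₃) ^ (m + 1) * (z₁ - 1) * Zun (m + 1) x y *
      Zsing (m + 1) x y z₁ * c₂_eq

open MvPolynomial in
theorem triDefect_eq_zero {R : Type*} [CommRing R] (m : ℕ) (x y z₁ z₂ z₃ : R) :
    triDefect m x y z₁ z₂ z₃ = 0 := by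
  obtain ⟨φ, injective⟩ : ∃ φ : MvPolynomial (Fin 5) ℤ →+* FractionRing (MvPolynomial (Fin 5) ℤ),
      Function.Injective φ := ⟨algebraMap _ _, IsFractionRing.injective _ _⟩
  have ne_zero (p : MvPolynomial (Fin 5) ℤ) (hp : eval ![1, 2, 2, 2, 2] p ≠ 0) : φ p ≠ 0 := by
    rw [map_ne_zero_iff φ injective]
    rintro rfl
    exact hp (map_zero _)
  have turn_ne_zero (i : Fin 5) (hi : eval ![1, 2, 2, 2, 2] (X i : MvPolynomial (Fin 5) ℤ) = 2) :
      straightWeight (φ (X 0)) (1 + φ (X 0) - φ (X 1)) (φ (X i)) (φ (X i)) ≠ 0 := by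
    have := ne_zero (straightWeight (X 0) (1 + X 0 - X 1) (X i) (X i))
      (by rw [eval_X] at hi; simp [straightWeight, hi])
    simpa [straightWeight] using this
  have universal : triDefect m (X 0) (X 1) (X 2) (X 3) (X 4 : MvPolynomial (Fin 5) ℤ) = 0 := by
    rw [← map_eq_zero_iff φ injective, map_triDefect]
    refine triDefect_eq_zero_of_ne_zero m (ne_zero _ (by simp)) (ne_zero _ (by simp))
      (ne_zero _ (by simp)) ?_ (turn_ne_zero 2 (by simp)) (turn_ne_zero 3 (by simp)) ?_ ?_
    · have := ne_zero (1 - (1 - X 1) * X 4) (by simp)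
      simpa using this
    · have := ne_zero (X 1 * X 2 * X 4 - (X 2 - 1) * (X 4 - 1)) (by simp)
      simpa using this
    · have := ne_zero (X 1 - X 0 * (X 3 - 1) * (X 4 - 1)) (by simp)
      simpa using this
  have specialize := congrArg (eval₂Hom (Int.castRingHom R) ![x, y, z₁, z₂, z₃]) universal
  rw [map_triDefect] at specialize
  simpa using specialize

end Identity

/-- Second identity for the triply-refined ASM generating function, stated for
all values of the variables in any commutative ring, equivalently as an
identity of polynomials in `ℤ[x,y,z1,z2,z3]`. -/
theorem stmt4 {R : Type*} [CommRing R] (x y z1 z2 z3 : R) (n : ℕ) (hn : 2 ≤ n) :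
    y * (z2 - z1) * z3 * Ztri n x y z1 z2 z3 * Zun (n - 1) x y =
      (z1 - 1) * ((z2 - 1) * (z3 - 1) - y * z2 * z3) *
          Zadj n x y z1 z3 * Zsing (n - 1) x y z2
      - (z2 - 1) * (x * (z1 - 1) * (z3 - 1) - y) * z1 * z3 *
          Zbaradj n x y z2 z3 * Zsing (n - 1) x y z1
      - (z1 - 1) * (z2 - 1) * (z3 - 1) * Zsing (n - 1) x y z2 * Zun (n - 1) x y
      + (z1 - 1) * (z2 - 1) * (z3 - 1) * z1 * z2 ^ (n - 1) * (x * z3) ^ n *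
          Zsing (n - 1) x y z1 * Zun (n - 1) x y := by
  obtain ⟨m, rfl⟩ := Nat.exists_eq_add_of_le' hn
  exact sub_eq_zero.1 (triDefect_eq_zero m x y z1 z2 z3)
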